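/- arXiv:2506.22104 — 2 statements merged into one kernel-verified Lean document; each statement's English description precedes it below -/
import Mathlib

section
/- Every combinatorial graph map f : Γ → Λ between connected graphs admits a factorization Γ → Σ → Λ in which the first map is inert and the second is active; moreover, for any two such factorizations Γ → Σ → Λ and Γ → Σ' → Λ there is a unique isomorphism of graphs Σ ≅ Σ' compatible with both factorizations. In other words, the inert and active maps form a factorization system on the category of connected graphs. -/
/-- A graph: finite sets `V` of vertices and `A` of arcs (half-edges), a fixed-point
free involution `† = dag` on arcs, and an endpoint map `t : A → V ⊔ {∞}`
(we encode `V ⊔ {∞}` as `Option V` with `∞ = none`). -/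
structure CGraph : Type 1 where
  V : Type
  A : Type
  [fintypeV : Fintype V]
  [fintypeA : Fintype A]
  dag : A → A
  dag_dag : ∀ a, dag (dag a) = a
  dag_ne : ∀ a, dag a ≠ a
  t : A → Option V

attribute [instance] CGraph.fintypeV CGraph.fintypeA

namespace CGraph

/-- The generating relation on `V ⊔ A`: an arc touches its `†`-partner, and an arc
touches its endpoint (when the endpoint is a vertex). -/
inductive Touch (G : CGraph) : (G.V ⊕ G.A) → (G.V ⊕ G.A) → Prop
  | dag (a : G.A) : Touch G (Sum.inr a) (Sum.inr (G.dag a))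
  | incid (a : G.A) (v : G.V) : G.t a = some v → Touch G (Sum.inr a) (Sum.inl v)

/-- A graph is connected if `V ⊔ A` is nonempty and the equivalence relation generated
by `Touch` has exactly one equivalence class. -/
def Connected (G : CGraph) : Prop :=
  Nonempty (G.V ⊕ G.A) ∧ ∀ x y : G.V ⊕ G.A, Relation.EqvGen G.Touch x y

/-- The valence of a vertex: the number of arcs ending at it. -/
noncomputable def valence (G : CGraph) (v : G.V) : ℕ :=
  Nat.card {a : G.A // G.t a = some v}

/-- A vertex is bivalent if exactly two arcs end at it. -/
def Bivalent (G : CGraph) (v : G.V) : Prop := G.valence v = 2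

/-- `x ∈ V ⊔ {∞}` is bivalent or `∞`. -/
def BivAt (G : CGraph) (x : Option G.V) : Prop :=
  x = none ∨ ∃ v, x = some v ∧ G.Bivalent v

/-- `IsPath G l s e`: the list of arcs `l = [a₁, …, aₙ]` is a path from `s` to `e`:
`t(a₁†) = s`, `t(aᵢ) = t(aᵢ₊₁†)` for `i < n`, and `t(aₙ) = e`; the empty path is a
path from `s` to `e` exactly when `s = e`. -/
def IsPath (G : CGraph) : List G.A → Option G.V → Option G.V → Prop
  | [], s, e => s = e
  | a :: l, s, e => G.t (G.dag a) = s ∧ G.IsPath l (G.t a) e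

/-- A path is bivalent if each of its intermediate vertices `t(aᵢ)`, `i < n`, is
bivalent or `∞`. -/
def IsBivalentPath (G : CGraph) (l : List G.A) (s e : Option G.V) : Prop :=
  G.IsPath l s e ∧
    ∀ (i : ℕ) (h : i + 1 < l.length), G.BivAt (G.t (l.get ⟨i, Nat.lt_of_succ_lt h⟩))

/-- The underlying data of a combinatorial graph map `Γ → Λ`: a basepoint-preserving
map on vertices-with-∞ and a map on arcs in the opposite direction. -/
structure PreMap (G H : CGraph) : Type where
  fv : Option G.V → Option H.V
  fa : H.A → G.A

/-- `FiberList f a l`: the list `l` enumerates `f_a⁻¹(a)` (without repetitions) and is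
a bivalent path in the target graph between the images of the endpoints of `a`
(oriented so that the identity map is a graph map). -/
def FiberList {G H : CGraph} (f : PreMap G H) (a : G.A) (l : List H.A) : Prop :=
  (∀ b : H.A, b ∈ l ↔ f.fa b = a) ∧ l.Nodup ∧
    H.IsBivalentPath l (f.fv (G.t (G.dag a))) (f.fv (G.t a))

/-- `MidVertexOf H l w`: `w` occurs as an intermediate vertex of the path `l`. -/
def MidVertexOf (H : CGraph) (l : List H.A) (w : H.V) : Prop :=
  ∃ (i : ℕ) (h : i + 1 < l.length), H.t (l.get ⟨i, Nat.lt_of_succ_lt h⟩) = some w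

/-- `OnFiberPath f w a`: the vertex `w` of the target occurs as an intermediate vertex
of the bivalent path enumerating `f_a⁻¹(a)`. -/
def OnFiberPath {G H : CGraph} (f : PreMap G H) (w : H.V) (a : G.A) : Prop :=
  ∃ l : List H.A, FiberList f a l ∧ MidVertexOf H l w

/-- The conditions for a pair `(f_v, f_a)` to be a combinatorial graph map:
(1) `f_v(∞) = ∞`; (2) `f_a` commutes with `†`; (3) each `f_a⁻¹(a)` admits an ordering
making it a bivalent path between the images of the endpoints of `a`; (4) vertices
identified by `f_v` are joined by a path of arcs outside the image of `f_a`;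
(5) each vertex of the target not in the image of `f_v` is bivalent and occurs as an
intermediate vertex of exactly one of the bivalent paths from (3) (where the paths of
an arc and of its `†`-partner are regarded as the same path). -/
def IsGraphMap {G H : CGraph} (f : PreMap G H) : Prop :=
  f.fv none = none ∧
  (∀ b : H.A, f.fa (H.dag b) = G.dag (f.fa b)) ∧
  (∀ a : G.A, ∃ l : List H.A, FiberList f a l) ∧
  (∀ v v' : G.V, f.fv (some v) = f.fv (some v') → f.fv (some v) ≠ none →
    ∃ l : List G.A, (∀ c ∈ l, c ∉ Set.range f.fa) ∧ G.IsPath l (some v) (some v')) ∧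
  (∀ w : H.V, (∀ v : G.V, f.fv (some v) ≠ some w) →
    H.Bivalent w ∧ ∃ a : G.A, OnFiberPath f w a ∧
      ∀ a' : G.A, OnFiberPath f w a' → a' = a ∨ a' = G.dag a)

/-- The identity pre-map. -/
def PreMap.id (G : CGraph) : PreMap G G := ⟨fun x => x, fun a => a⟩

/-- Composition of pre-maps: `f` first, then `g`. -/
def PreMap.comp {G H K : CGraph} (f : PreMap G H) (g : PreMap H K) : PreMap G K :=
  ⟨g.fv ∘ f.fv, f.fa ∘ g.fa⟩

/-- A combinatorial graph map is inert if `f_v⁻¹(w)` has exactly one element for every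
vertex `w` of the target, and `f_a⁻¹(a)` is empty only when `f_v(t(a)) = ∞`. -/
def IsInert {G H : CGraph} (f : PreMap G H) : Prop :=
  (∀ w : H.V, ∃! v : G.V, f.fv (some v) = some w) ∧
  (∀ a : G.A, (∀ b : H.A, f.fa b ≠ a) → f.fv (G.t a) = none)

/-- A combinatorial graph map is active if `f_v⁻¹(∞) = {∞}` and none of the bivalent
paths `f_a⁻¹(a)` passes through `∞`. -/
def IsActive {G H : CGraph} (f : PreMap G H) : Prop :=
  (∀ x : Option G.V, f.fv x = none → x = none) ∧
  (∀ (a : G.A) (l : List H.A), FiberList f a l →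
    ∀ (i : ℕ) (h : i + 1 < l.length), H.t (l.get ⟨i, Nat.lt_of_succ_lt h⟩) ≠ none)

/-- An isomorphism of graphs: a graph map with a two-sided inverse graph map. -/
def IsGraphIso {G H : CGraph} (f : PreMap G H) : Prop :=
  IsGraphMap f ∧ ∃ g : PreMap H G, IsGraphMap g ∧
    f.comp g = PreMap.id G ∧ g.comp f = PreMap.id H

end CGraph

/-!
STATEMENT 11: Every combinatorial graph map `f : Γ → Λ` between connected graphs
admits a factorization `Γ → Σ → Λ` in which the first map is inert and the second is
active; moreover, for any two such factorizations `Γ → Σ → Λ` and `Γ → Σ' → Λ` there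
is a unique isomorphism of graphs `Σ ≅ Σ'` compatible with both factorizations.
(In other words, inert and active maps form a factorization system on the category of
connected graphs.)
-/

/-!
Call two arcs of `Λ` consecutive if one follows the other in a fibre of `f_a` and they meet at a
vertex not hit by `f_v`, and call the classes generated by this relation runs. Since such a vertex
is bivalent, an arc has at most one successor and at most one predecessor, so each run is a chain
with a unique terminal arc. A fibre meets the image of `f_v` in its interior only at `∞`, because
`Γ` is connected; hence the runs are the pieces obtained by cutting the fibres where they pass
through `∞`. The graph `Σ` has as vertices the vertices of `Γ` not sent to `∞`, and as arcs the runs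
together with the arcs of `Γ` that `f` collapses to a vertex.

Conversely, in any factorization the nonempty fibres of the active map are the runs, an arc of the
middle graph is determined by its image in `Γ` and its fibre in `Λ`, and it ends at `∞` precisely
when some arc of its fibre does. Matching the arcs of two middle graphs that have the same data
gives the unique compatible isomorphism.
-/

namespace CGraph

section Lists

variable {α : Type*}

theorem exists_maximal_isChain_prefix (r : α → α → Prop) (b : α) (v : List α) :
    ∃ m l₁, v = m ++ l₁ ∧ (b :: m).IsChain r ∧
      ∀ x ∈ (b :: m).getLast?, ∀ y ∈ l₁.head?, ¬r x y := by
  induction v generalizing b with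
  | nil => exact ⟨[], [], by simp⟩
  | cons c v ih =>
    by_cases hbc : r b c
    · obtain ⟨m, l₁, rfl, hm, hmax⟩ := ih c
      exact ⟨c :: m, l₁, rfl, hm.cons_cons hbc, by simpa using hmax⟩
    · exact ⟨[], c :: v, by simpa using hbc⟩

theorem exists_maximal_isChain_infix (r : α → α → Prop) {b : α} {l : List α} (hb : b ∈ l) :
    ∃ l₀ m l₁, l = l₀ ++ (m ++ l₁) ∧ b ∈ m ∧ m.IsChain r ∧
      (∀ x ∈ l₀.getLast?, ∀ y ∈ m.head?, ¬r x y) ∧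
      ∀ x ∈ m.getLast?, ∀ y ∈ l₁.head?, ¬r x y := by
  obtain ⟨u, v, rfl⟩ := List.append_of_mem hb
  obtain ⟨m, l₁, rfl, hm, hmax⟩ := exists_maximal_isChain_prefix r b v
  obtain ⟨k, l₀, hu, hk, hkmax⟩ := exists_maximal_isChain_prefix (flip r) b u.reverse
  obtain rfl : u = l₀.reverse ++ k.reverse := by simpa using congrArg List.reverse hu
  refine ⟨l₀.reverse, k.reverse ++ b :: m, l₁, by simp, by simp, ?_, ?_, ?_⟩
  · have hk' : (k.reverse ++ [b]).IsChain r := by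
      simpa [flip] using List.isChain_reverse.mpr hk
    simpa using List.isChain_split.mpr ⟨hk', hm⟩
  · intro x hx y hy
    have hx' : x ∈ l₀.head? := by simpa using hx
    have hy' : y ∈ (b :: k).getLast? := by
      simpa [List.getLast?_cons, Option.or_eq_some_iff, Option.getD_eq_iff] using hy
    exact hkmax y hy' x hx'
  · intro x hx
    exact hmax x (by simpa using hx)

end Lists

variable {G H S S' : CGraph}

theorem dag_involutive (G : CGraph) : Function.Involutive G.dag := G.dag_dag

/-- Two arcs are a bivalent step if the second starts where the first ends, at a bivalent vertex
or at `∞`; bivalent paths are the chains of this relation. -/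
def BivalentStep (H : CGraph) (b c : H.A) : Prop := H.t b = H.t (H.dag c) ∧ H.BivAt (H.t b)

theorem BivalentStep.dag {b c : H.A} (h : H.BivalentStep b c) :
    H.BivalentStep (H.dag c) (H.dag b) :=
  ⟨by rw [H.dag_dag, h.1], h.1 ▸ h.2⟩

@[simp]
theorem bivAt_some {w : H.V} : H.BivAt (some w) ↔ H.Bivalent w := by
  simp [BivAt]

theorem isPath_iff {l : List H.A} (hl : l ≠ []) {s e : Option H.V} :
    H.IsPath l s e ↔ l.IsChain (fun b c ↦ H.t b = H.t (H.dag c)) ∧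
      (∀ h ∈ l.head?, H.t (H.dag h) = s) ∧ ∀ z ∈ l.getLast?, H.t z = e := by
  induction l generalizing s with
  | nil => contradiction
  | cons b l ih =>
    cases l with
    | nil => simp [IsPath]
    | cons c l =>
      have ih' := ih (List.cons_ne_nil c l) (s := H.t b)
      rw [IsPath, ih']
      simp only [eq_comm, List.head?_cons, Option.mem_def, Option.some.injEq, forall_eq',
        List.isChain_cons_cons, List.getLast?_cons_cons]
      tauto

theorem isBivalentPath_iff {l : List H.A} (hl : l ≠ []) {s e : Option H.V} :
    H.IsBivalentPath l s e ↔ l.IsChain H.BivalentStep ∧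
      (∀ h ∈ l.head?, H.t (H.dag h) = s) ∧ ∀ z ∈ l.getLast?, H.t z = e := by
  rw [IsBivalentPath, isPath_iff hl]
  simp only [List.isChain_iff_getElem, BivalentStep, List.get_eq_getElem]
  grind

theorem midVertexOf_iff {l : List H.A} {w : H.V} :
    H.MidVertexOf l w ↔ ∃ l₁ b c l₂, l = l₁ ++ b :: c :: l₂ ∧ H.t b = some w := by
  have h := (List.isChain_iff_getElem (R := fun b _ ↦ H.t b ≠ some w) (l := l)).symm.trans
    List.isChain_iff_forall_rel_of_append_cons_cons
  simp only [MidVertexOf, List.get_eq_getElem]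
  grind

theorem isBivalentPath_singleton {b : H.A} {s e : Option H.V} :
    H.IsBivalentPath [b] s e ↔ H.t (H.dag b) = s ∧ H.t b = e := by
  simp [IsBivalentPath, IsPath]

theorem IsBivalentPath.cons {l : List H.A} {b : H.A} {e : Option H.V} (hb : H.BivAt (H.t b))
    (hl : H.IsBivalentPath l (H.t b) e) : H.IsBivalentPath (b :: l) (H.t (H.dag b)) e :=
  ⟨⟨rfl, hl.1⟩, fun
    | 0, _ => hb
    | i + 1, h => hl.2 i (by simpa using h)⟩

theorem Connected.forall_of_touch (hG : G.Connected) {P : G.V ⊕ G.A → Prop}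
    (hP : ∀ x y, G.Touch x y → (P x ↔ P y)) {x₀ : G.V ⊕ G.A} (hx₀ : P x₀) (x : G.V ⊕ G.A) :
    P x := by
  have hlift := congrArg (Quot.lift P fun x y h ↦ propext (hP x y h))
    (Quot.eqvGen_sound (hG.2 x₀ x))
  exact hlift.mp hx₀

theorem Bivalent.exists_arc {w : H.V} (hw : H.Bivalent w) : ∃ b, H.t b = some w := by
  obtain ⟨⟨b, hb⟩, -⟩ := Nat.card_eq_two_iff.mp hw
  exact ⟨b, hb⟩

theorem Bivalent.eq_or_eq {w : H.V} (hw : H.Bivalent w) {b c d : H.A} (hb : H.t b = some w)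
    (hc : H.t c = some w) (hbc : b ≠ c) (hd : H.t d = some w) : d = b ∨ d = c := by
  obtain ⟨x, y, -, hxy⟩ := Nat.card_eq_two_iff.mp hw
  have key (e : {a // H.t a = some w}) : e = x ∨ e = y := by
    have he : e ∈ ({x, y} : Set _) := hxy ▸ Set.mem_univ e
    simpa using he
  grind [key ⟨b, hb⟩, key ⟨c, hc⟩, key ⟨d, hd⟩]

section FiberList

variable {f : PreMap G H} {a : G.A} {l : List H.A}

theorem FiberList.isChain (hl : FiberList f a l) : l.IsChain H.BivalentStep := by
  rcases eq_or_ne l [] with rfl | hne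
  · exact List.IsChain.nil
  · exact ((isBivalentPath_iff hne).mp hl.2.2).1

theorem FiberList.bivalentStep {l₁ l₂ : List H.A} {b c : H.A}
    (hl : FiberList f a (l₁ ++ b :: c :: l₂)) : H.BivalentStep b c :=
  (List.isChain_append_cons_cons.mp hl.isChain).2.1

theorem FiberList.t_last {b : H.A} (hl : FiberList f a (l ++ [b])) : H.t b = f.fv (G.t a) :=
  ((isBivalentPath_iff (by simp)).mp hl.2.2).2.2 b (by simp)

theorem FiberList.t_dag_head {b : H.A} (hl : FiberList f a (b :: l)) :
    H.t (H.dag b) = f.fv (G.t (G.dag a)) :=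
  hl.2.2.1.1

theorem FiberList.t_mem_range_of_last {b : H.A} (hl : FiberList f a (l ++ [b])) :
    H.t b ∈ Set.range f.fv :=
  ⟨_, hl.t_last.symm⟩

theorem FiberList.exists_next (hl : FiberList f a l) {b : H.A} (hb : b ∈ l)
    (ht : H.t b ∉ Set.range f.fv) : ∃ l₁ c l₂, l = l₁ ++ b :: c :: l₂ := by
  obtain ⟨l₁, l₂, rfl⟩ := List.append_of_mem hb
  cases l₂ with
  | nil => exact absurd hl.t_mem_range_of_last ht
  | cons c l₂ => exact ⟨l₁, c, l₂, rfl⟩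

theorem FiberList.exists_mem_suffix {l' : List H.A} (hl : FiberList f a (l ++ l'))
    (hne : l' ≠ []) : ∃ z ∈ l', H.t z = f.fv (G.t a) := by
  obtain ⟨l₁, z, rfl⟩ := (List.eq_nil_or_concat l').resolve_left hne
  rw [List.concat_eq_append, ← List.append_assoc] at hl
  exact ⟨z, by simp, hl.t_last⟩

theorem FiberList.exists_later_ne {l₁ l₂ : List H.A} {b c : H.A}
    (hl : FiberList f a (l₁ ++ b :: c :: l₂)) :
    ∃ z, z ≠ b ∧ f.fa z = a ∧ H.t z = f.fv (G.t a) := by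
  have hb : b ∉ c :: l₂ := (List.nodup_cons.mp (List.nodup_append.mp hl.2.1).2.1).1
  obtain ⟨z, hz, hzt⟩ := FiberList.exists_mem_suffix (l := l₁ ++ [b]) (l' := c :: l₂)
    (by simpa using hl) (List.cons_ne_nil c l₂)
  exact ⟨z, ne_of_mem_of_not_mem hz hb, (hl.1 z).mp (by simp_all), hzt⟩

variable (hd : ∀ b, f.fa (H.dag b) = G.dag (f.fa b))
include hd

theorem ne_dag_of_fa_eq {b c : H.A} (h : f.fa b = f.fa c) : b ≠ H.dag c := by
  rintro rfl
  exact G.dag_ne _ ((hd c).symm.trans h)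

theorem eq_or_eq_dag_of_bivalent {w : H.V} (hw : H.Bivalent w) {b c d : H.A}
    (hfa : f.fa b = f.fa c) (hbc : H.t b = H.t (H.dag c)) (hb : H.t b = some w)
    (ht : H.t d = some w) : d = b ∨ d = H.dag c :=
  hw.eq_or_eq hb (hbc ▸ hb) (ne_dag_of_fa_eq hd hfa) ht

theorem FiberList.reverse (hl : FiberList f a l) :
    FiberList f (G.dag a) (l.map H.dag).reverse := by
  refine ⟨fun b ↦ ?_, List.nodup_reverse.mpr (hl.2.1.map H.dag_involutive.injective), ?_⟩
  · rw [List.mem_reverse, List.mem_map]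
    constructor
    · rintro ⟨c, hc, rfl⟩
      rw [hd, (hl.1 c).mp hc]
    · rintro hb
      exact ⟨H.dag b, (hl.1 _).mpr (by rw [hd, hb, G.dag_dag]), H.dag_dag b⟩
  · rcases eq_or_ne l [] with rfl | hne
    · simpa [IsBivalentPath, IsPath, G.dag_dag, eq_comm] using hl.2.2
    · obtain ⟨hchain, hhead, hlast⟩ := (isBivalentPath_iff hne).mp hl.2.2
      refine (isBivalentPath_iff (by simpa using hne)).mpr ⟨?_, ?_, ?_⟩
      · rw [List.isChain_reverse, List.isChain_map]
        exact hchain.imp fun _ _ h ↦ h.dag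
      · simpa [H.dag_dag, G.dag_dag] using hlast
      · simpa [H.dag_dag, G.dag_dag] using hhead

theorem isGraphMap_of_bivalent (hnone : f.fv none = none)
    (hfib : ∀ a, ∃ l, FiberList f a l)
    (hpath : ∀ v v' : G.V, f.fv (some v) = f.fv (some v') → f.fv (some v) ≠ none →
      ∃ l : List G.A, (∀ c ∈ l, c ∉ Set.range f.fa) ∧ G.IsPath l (some v) (some v'))
    (hbiv : ∀ w : H.V, some w ∉ Set.range f.fv → H.Bivalent w) : IsGraphMap f := by
  refine ⟨hnone, hd, hfib, hpath, fun w hw ↦ ?_⟩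
  have hw' : some w ∉ Set.range f.fv := by
    rintro ⟨_ | v, hv⟩
    · simp [hnone] at hv
    · exact hw v hv
  obtain ⟨b, hb⟩ := (hbiv w hw').exists_arc
  obtain ⟨l, hl⟩ := hfib (f.fa b)
  obtain ⟨l₁, c, l₂, rfl⟩ := hl.exists_next ((hl.1 b).mpr rfl) (hb ▸ hw')
  have hc : f.fa b = f.fa c := ((hl.1 c).mp (by simp)).symm
  have hon {a : G.A} : OnFiberPath f w a ↔ ∃ d, f.fa d = a ∧ H.t d = some w := by
    constructor
    · rintro ⟨l, hl, hmid⟩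
      obtain ⟨l₁, d, c, l₂, rfl, hdw⟩ := midVertexOf_iff.mp hmid
      exact ⟨d, (hl.1 d).mp (by simp), hdw⟩
    · rintro ⟨d, rfl, hdw⟩
      obtain ⟨l, hl⟩ := hfib (f.fa d)
      obtain ⟨l₁, c, l₂, rfl⟩ := hl.exists_next ((hl.1 d).mpr rfl) (hdw ▸ hw')
      exact ⟨_, hl, midVertexOf_iff.mpr ⟨l₁, d, c, l₂, rfl, hdw⟩⟩
  refine ⟨hbiv w hw', f.fa b, hon.mpr ⟨b, rfl, hb⟩, fun a' ha' ↦ ?_⟩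
  obtain ⟨d, rfl, ht⟩ := hon.mp ha'
  rcases eq_or_eq_dag_of_bivalent hd (hbiv w hw') hc hl.bivalentStep.1 hb ht with rfl | rfl
  · exact Or.inl rfl
  · exact Or.inr (by rw [hd, hc])

end FiberList

namespace IsGraphMap
variable {f : PreMap G H}

theorem fv_none (hf : IsGraphMap f) : f.fv none = none := hf.1

theorem fa_dag (hf : IsGraphMap f) (b : H.A) : f.fa (H.dag b) = G.dag (f.fa b) := hf.2.1 b

theorem exists_fiberList (hf : IsGraphMap f) (a : G.A) : ∃ l, FiberList f a l := hf.2.2.1 a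

theorem exists_path (hf : IsGraphMap f) {v v' : G.V} (h : f.fv (some v) = f.fv (some v'))
    (hne : f.fv (some v) ≠ none) :
    ∃ l : List G.A, (∀ c ∈ l, c ∉ Set.range f.fa) ∧ G.IsPath l (some v) (some v') :=
  hf.2.2.2.1 v v' h hne

theorem bivalent (hf : IsGraphMap f) {w : H.V} (hw : some w ∉ Set.range f.fv) : H.Bivalent w :=
  (hf.2.2.2.2 w fun _ hv ↦ hw ⟨_, hv⟩).1

theorem dag_mem_range_iff (hf : IsGraphMap f) {a : G.A} :
    G.dag a ∈ Set.range f.fa ↔ a ∈ Set.range f.fa := by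
  have hmp {a : G.A} : a ∈ Set.range f.fa → G.dag a ∈ Set.range f.fa := by
    rintro ⟨b, rfl⟩
    exact ⟨H.dag b, hf.fa_dag b⟩
  exact ⟨fun h ↦ G.dag_dag a ▸ hmp h, hmp⟩

theorem fiberList_nil (hf : IsGraphMap f) {a : G.A} (ha : a ∉ Set.range f.fa) :
    FiberList f a [] := by
  obtain ⟨l, hl⟩ := hf.exists_fiberList a
  cases l with
  | nil => exact hl
  | cons b l => exact absurd ⟨b, (hl.1 b).mp (by simp)⟩ ha

theorem fv_t_dag (hf : IsGraphMap f) {a : G.A} (ha : a ∉ Set.range f.fa) :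
    f.fv (G.t (G.dag a)) = f.fv (G.t a) :=
  (hf.fiberList_nil ha).2.2.1

theorem forall_notMem_range (hf : IsGraphMap f) (hG : G.Connected) {v : G.V} {w : H.V}
    (hv : f.fv (some v) = some w) (hw : ∀ a, f.fv (G.t a) = some w → a ∉ Set.range f.fa)
    (a : G.A) : a ∉ Set.range f.fa := by
  let P : G.V ⊕ G.A → Prop :=
    Sum.elim (fun v ↦ f.fv (some v) = some w) fun a ↦ f.fv (G.t a) = some w
  have hdag {a : G.A} (ha : f.fv (G.t a) = some w) : f.fv (G.t (G.dag a)) = some w := by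
    rw [hf.fv_t_dag (hw a ha), ha]
  have hP : ∀ x y, G.Touch x y → (P x ↔ P y) := by
    rintro _ _ (a | ⟨a, v', hav'⟩)
    · exact ⟨hdag, fun h ↦ G.dag_dag a ▸ hdag h⟩
    · simp [P, hav']
  exact hw a (hG.forall_of_touch hP (x₀ := Sum.inl v) hv (Sum.inr a))

theorem fv_t_ne_of_intermediate (hf : IsGraphMap f) {a : G.A} {l₁ l₂ : List H.A}
    {b c : H.A} (hl : FiberList f a (l₁ ++ b :: c :: l₂)) {w : H.V} (hb : H.t b = some w) :
    f.fv (G.t a) ≠ some w := by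
  intro ha
  have hbc := hl.bivalentStep
  have hfa : f.fa b = f.fa c := by rw [(hl.1 b).mp (by simp), (hl.1 c).mp (by simp)]
  obtain ⟨y, hyb, hya, hyt⟩ := hl.exists_later_ne
  rcases eq_or_eq_dag_of_bivalent hf.fa_dag (bivAt_some.mp (hb ▸ hbc.2)) hfa hbc.1 hb
    (hyt.trans ha) with rfl | rfl
  · exact hyb rfl
  · exact ne_dag_of_fa_eq hf.fa_dag (hya.trans ((hl.1 c).mp (by simp)).symm) rfl

theorem t_notMem_range_of_intermediate (hf : IsGraphMap f) (hG : G.Connected) {a : G.A}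
    {l₁ l₂ : List H.A} {b c : H.A} (hl : FiberList f a (l₁ ++ b :: c :: l₂))
    (hne : H.t b ≠ none) : H.t b ∉ Set.range f.fv := by
  obtain ⟨w, hb⟩ := Option.ne_none_iff_exists'.mp hne
  rw [hb]
  rintro ⟨_ | v, hv⟩
  · simp [hf.fv_none] at hv
  have hbc := hl.bivalentStep
  have hfb : f.fa b = a := (hl.1 b).mp (by simp)
  have hfc : f.fa c = a := (hl.1 c).mp (by simp)
  have ha : f.fv (G.t a) ≠ some w := hf.fv_t_ne_of_intermediate hl hb
  have hrev : FiberList f (G.dag a)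
      ((l₂.map H.dag).reverse ++ H.dag c :: H.dag b :: (l₁.map H.dag).reverse) := by
    simpa using hl.reverse hf.fa_dag
  have ha' : f.fv (G.t (G.dag a)) ≠ some w :=
    hf.fv_t_ne_of_intermediate hrev (hbc.1 ▸ hb)
  refine hf.forall_notMem_range hG hv (fun a₁ ha₁ ↦ ?_) a ⟨b, hfb⟩
  rintro ⟨d, rfl⟩
  obtain ⟨l, hld⟩ := hf.exists_fiberList (f.fa d)
  obtain ⟨z, hz, hzt⟩ := hld.exists_mem_suffix (l := []) (List.ne_nil_of_mem ((hld.1 d).mpr rfl))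
  rw [← (hld.1 z).mp hz] at ha₁ hzt
  rcases eq_or_eq_dag_of_bivalent hf.fa_dag (bivAt_some.mp (hb ▸ hbc.2)) (hfb.trans hfc.symm)
    hbc.1 hb (hzt.trans ha₁) with rfl | rfl
  · exact ha (hfb ▸ ha₁)
  · exact ha' (by rw [← hfc, ← hf.fa_dag, ha₁])

theorem t_eq_fv (hf : IsGraphMap f) (hG : G.Connected) {b : H.A} (hne : H.t b ≠ none)
    (hb : H.t b ∈ Set.range f.fv) : H.t b = f.fv (G.t (f.fa b)) := by
  obtain ⟨l, hl⟩ := hf.exists_fiberList (f.fa b)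
  obtain ⟨l₁, l₂, rfl⟩ := List.append_of_mem ((hl.1 b).mpr rfl)
  cases l₂ with
  | nil => exact hl.t_last
  | cons c l₂ => exact absurd hb (hf.t_notMem_range_of_intermediate hG hl hne)

end IsGraphMap

section Runs

/-- `f.Consecutive b c`: the arc `c` follows `b` in an `f`-fibre, and the two arcs meet at a vertex
not hit by `f`. The fibres of the active part of `f` are the maximal chains of this relation. -/
def PreMap.Consecutive (f : PreMap G H) (b c : H.A) : Prop :=
  f.fa b = f.fa c ∧ H.t b = H.t (H.dag c) ∧ H.t b ∉ Set.range f.fv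

/-- The equivalence classes of arcs generated by `f.Consecutive`. -/
def PreMap.Run (f : PreMap G H) : Type := Quot f.Consecutive

/-- The run containing an arc. -/
def PreMap.run (f : PreMap G H) (b : H.A) : f.Run := Quot.mk _ b

theorem PreMap.run_surjective (f : PreMap G H) : Function.Surjective f.run := Quot.exists_rep

variable {f : PreMap G H}

theorem run_eq_of_isChain {m : List H.A} (hm : m.IsChain f.Consecutive) {b c : H.A}
    (hb : b ∈ m) (hc : c ∈ m) : f.run b = f.run c := by
  have hchain : (m.map f.run).IsChain (· = ·) :=
    (List.isChain_map f.run).mpr (hm.imp fun _ _ h ↦ Quot.sound h)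
  exact hchain.pairwise.forall_of_forall (fun _ _ ↦ rfl) (List.mem_map_of_mem hb)
    (List.mem_map_of_mem hc)

variable (hf : IsGraphMap f)
include hf

namespace IsGraphMap

theorem exists_bivalent {b : H.A} (hb : H.t b ∉ Set.range f.fv) :
    ∃ w, H.t b = some w ∧ H.Bivalent w := by
  obtain ⟨w, hw⟩ := Option.ne_none_iff_exists'.mp
    fun h : H.t b = none ↦ hb ⟨none, hf.fv_none.trans h.symm⟩
  exact ⟨w, hw, hf.bivalent (hw ▸ hb)⟩

theorem none_mem_range : none ∈ Set.range f.fv := ⟨none, hf.fv_none⟩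

theorem consecutive_dag {b c : H.A} (h : f.Consecutive b c) :
    f.Consecutive (H.dag c) (H.dag b) :=
  ⟨by rw [hf.fa_dag, hf.fa_dag, h.1], by rw [H.dag_dag, h.2.1], h.2.1 ▸ h.2.2⟩

theorem consecutive_bivalentStep {b c : H.A} (h : f.Consecutive b c) : H.BivalentStep b c := by
  obtain ⟨w, hw, hbiv⟩ := hf.exists_bivalent h.2.2
  exact ⟨h.2.1, hw ▸ bivAt_some.mpr hbiv⟩

theorem consecutive_rightUnique : Relator.RightUnique f.Consecutive := by
  intro b c d hbc hbd
  obtain ⟨w, hw, hbiv⟩ := hf.exists_bivalent hbc.2.2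
  rcases eq_or_eq_dag_of_bivalent hf.fa_dag hbiv hbc.1 hbc.2.1 hw (hbd.2.1 ▸ hw) with h | h
  · exact absurd h.symm (ne_dag_of_fa_eq hf.fa_dag hbd.1)
  · exact H.dag_involutive.injective h.symm

theorem consecutive_leftUnique : Relator.LeftUnique f.Consecutive := fun _ _ _ hb hc ↦
  H.dag_involutive.injective <|
    hf.consecutive_rightUnique (hf.consecutive_dag hb) (hf.consecutive_dag hc)

theorem run_eq_iff_of_t_mem_range {b z : H.A} (hz : H.t z ∈ Set.range f.fv) :
    f.run b = f.run z ↔ Relation.ReflTransGen f.Consecutive b z := by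
  constructor
  · have hstep (b c : H.A) (hbc : f.Consecutive b c) :
        Relation.ReflTransGen f.Consecutive b z = Relation.ReflTransGen f.Consecutive c z := by
      refine propext ⟨fun h ↦ ?_, fun h ↦ h.head hbc⟩
      rcases h.cases_head with rfl | ⟨d, hbd, hdz⟩
      · exact absurd hz hbc.2.2
      · exact hf.consecutive_rightUnique hbc hbd ▸ hdz
    intro h
    have hlift := congrArg
      (Quot.lift (fun c ↦ Relation.ReflTransGen f.Consecutive c z) hstep) h
    exact hlift.mpr Relation.ReflTransGen.refl
  · intro h
    induction h using Relation.ReflTransGen.head_induction_on with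
    | refl => rfl
    | head hbc _ ih => exact (Quot.sound hbc).trans ih

theorem eq_of_run_eq {y z : H.A} (hy : H.t y ∈ Set.range f.fv) (hz : H.t z ∈ Set.range f.fv)
    (h : f.run y = f.run z) : y = z := by
  rcases ((hf.run_eq_iff_of_t_mem_range hz).mp h).cases_head with h | ⟨c, hyc, -⟩
  · exact h
  · exact absurd hy hyc.2.2

theorem exists_maximal_chain (b : H.A) :
    ∃ m : List H.A, b ∈ m ∧ m.Nodup ∧ m.IsChain f.Consecutive ∧
      (∀ h ∈ m.head?, H.t (H.dag h) ∈ Set.range f.fv) ∧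
      ∀ z ∈ m.getLast?, H.t z ∈ Set.range f.fv := by
  obtain ⟨l, hl⟩ := hf.exists_fiberList (f.fa b)
  obtain ⟨l₀, m, l₁, rfl, hbm, hchain, hhead, hlast⟩ :=
    exists_maximal_isChain_infix f.Consecutive ((hl.1 b).mpr rfl)
  have hstep {x y : H.A} {u v : List H.A} (hxy : FiberList f (f.fa b) (u ++ x :: y :: v))
      (h : ¬f.Consecutive x y) : H.t x ∈ Set.range f.fv := by
    by_contra hx
    exact h ⟨by rw [(hxy.1 x).mp (by simp), (hxy.1 y).mp (by simp)], hxy.bivalentStep.1, hx⟩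
  refine ⟨m, hbm, ?_, hchain, fun x hx ↦ ?_, fun z hz ↦ ?_⟩
  · exact (List.nodup_append.mp (List.nodup_append.mp hl.2.1).2.1).1
  · obtain ⟨m', rfl⟩ := List.head?_eq_some_iff.mp hx
    rcases List.eq_nil_or_concat l₀ with rfl | ⟨l', y, rfl⟩
    · exact ⟨_, (FiberList.t_dag_head hl).symm⟩
    · have hl' : FiberList f (f.fa b) (l' ++ y :: x :: (m' ++ l₁)) := by simpa using hl
      exact hl'.bivalentStep.1 ▸ hstep hl' (hhead y (by simp) x (by simp))
  · obtain ⟨m', rfl⟩ := List.getLast?_eq_some_iff.mp hz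
    cases l₁ with
    | nil => exact FiberList.t_mem_range_of_last (l := l₀ ++ m') (by simpa using hl)
    | cons y l' =>
      exact hstep (u := l₀ ++ m') (v := l') (by simpa using hl) (hlast z hz y (by simp))

theorem mem_of_consecutive {m : List H.A} (hchain : m.IsChain f.Consecutive)
    (hhead : ∀ h ∈ m.head?, H.t (H.dag h) ∈ Set.range f.fv) {x y : H.A}
    (hxy : f.Consecutive x y) (hy : y ∈ m) : x ∈ m := by
  obtain ⟨u, v, rfl⟩ := List.append_of_mem hy
  rcases List.eq_nil_or_concat u with rfl | ⟨u', x', rfl⟩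
  · exact absurd (hxy.2.1 ▸ hhead y (by simp)) hxy.2.2
  · rw [List.concat_eq_append, List.append_assoc, List.singleton_append] at hchain
    have hx'y : f.Consecutive x' y := (List.isChain_append_cons_cons.mp hchain).2.1
    obtain rfl := hf.consecutive_leftUnique hxy hx'y
    simp

theorem mem_maximal_chain_iff {m : List H.A} (hchain : m.IsChain f.Consecutive)
    (hhead : ∀ h ∈ m.head?, H.t (H.dag h) ∈ Set.range f.fv)
    (hlast : ∀ z ∈ m.getLast?, H.t z ∈ Set.range f.fv) {b : H.A} (hb : b ∈ m) {c : H.A} :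
    c ∈ m ↔ f.run c = f.run b := by
  refine ⟨fun hc ↦ run_eq_of_isChain hchain hc hb, fun hc ↦ ?_⟩
  have hz := List.getLast?_eq_some_getLast (List.ne_nil_of_mem hb)
  set z := m.getLast (List.ne_nil_of_mem hb)
  have hzm : z ∈ m := List.mem_of_getLast? hz
  have hcz := (hf.run_eq_iff_of_t_mem_range (hlast z hz)).mp
    (hc.trans (run_eq_of_isChain hchain hb hzm))
  exact hcz.head_induction_on (motive := fun x _ ↦ x ∈ m) hzm
    fun hxy _ ↦ hf.mem_of_consecutive hchain hhead hxy

end IsGraphMap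
end Runs

section MiddleGraph

variable {f : PreMap G H}

namespace PreMap

/-- The vertices of the middle graph: those not sent to `∞`. -/
abbrev MiddleVertex (f : PreMap G H) : Type := {v : G.V // f.fv (some v) ≠ none}

open Classical in
/-- The vertex map of the inert part of `f`: the vertices sent to `∞` become `∞`. -/
noncomputable def toMiddleVertex (f : PreMap G H) (x : Option G.V) : Option f.MiddleVertex :=
  x.bind fun v ↦ if h : f.fv (some v) ≠ none then some ⟨v, h⟩ else none

/-- The arcs of the middle graph: the arcs of `G` that `f` collapses to a vertex, and the runs. -/
abbrev MiddleArc (f : PreMap G H) : Type :=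
  {a : G.A // a ∉ Set.range f.fa ∧ f.fv (G.t a) ≠ none} ⊕ f.Run

/-- The arc of `G` whose fibre contains a given run. -/
def Run.fa : f.Run → G.A := Quot.lift f.fa fun _ _ h ↦ h.1

open Classical in
/-- The endpoint map of the middle graph. The arc of `G` underlying a run may end at a vertex even
though the run, being cut off at an intermediate `∞` of the fibre, ends at `∞`. -/
noncomputable def middleT (f : PreMap G H) : f.MiddleArc → Option f.MiddleVertex
  | .inl a => f.toMiddleVertex (G.t a)
  | .inr r => if ∃ b, f.run b = r ∧ H.t b = none then none else f.toMiddleVertex (G.t r.fa)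

end PreMap

namespace IsGraphMap
variable (hf : IsGraphMap f)

open Classical in
/-- The graph `Σ` of the factorization `G → Σ → H` of `f`: the vertices sent to `∞` are removed, and
the arcs are cut wherever their fibres pass through `∞`. -/
noncomputable def middleGraph : CGraph where
  V := f.MiddleVertex
  A := f.MiddleArc
  fintypeV := Fintype.ofFinite _
  fintypeA := by
    have : Finite f.Run := Quot.finite _
    exact Fintype.ofFinite _
  dag := Sum.map
    (fun a ↦ ⟨G.dag a, mt hf.dag_mem_range_iff.mp a.2.1, (hf.fv_t_dag a.2.1).trans_ne a.2.2⟩)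
    (Quot.lift (fun b ↦ f.run (H.dag b)) fun _ _ h ↦ (Quot.sound (hf.consecutive_dag h)).symm)
  dag_dag := by
    rintro (a | r)
    · exact congrArg Sum.inl (Subtype.ext (G.dag_dag a))
    · obtain ⟨b, rfl⟩ := f.run_surjective r
      exact congrArg (fun c ↦ Sum.inr (f.run c)) (H.dag_dag b)
  dag_ne := by
    rintro (a | r) h
    · exact G.dag_ne a (congrArg Subtype.val (Sum.inl.inj h))
    · obtain ⟨b, rfl⟩ := f.run_surjective r
      refine G.dag_ne (f.fa b) ?_
      rw [← hf.fa_dag]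
      exact congrArg PreMap.Run.fa (Sum.inr.inj h)
  t := f.middleT

/-- The inert part `G → Σ` of `f`: it removes the vertices sent to `∞` and sends each arc of `Σ`
to the arc of `G` it was cut from. -/
noncomputable def inertPart : PreMap G hf.middleGraph where
  fv := f.toMiddleVertex
  fa := Sum.elim Subtype.val PreMap.Run.fa

/-- The active part `Σ → H` of `f`: it restricts `f` on vertices and sends each arc of `H` to its
run. -/
noncomputable def activePart : PreMap hf.middleGraph H where
  fv x := f.fv (x.map Subtype.val)
  fa b := Sum.inr (f.run b)

theorem activePart_inertPart_fv (x : Option G.V) :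
    hf.activePart.fv (hf.inertPart.fv x) = f.fv x := by
  rcases x with _ | v
  · rfl
  · by_cases h : f.fv (some v) = none
    · simp [inertPart, activePart, PreMap.toMiddleVertex, h, hf.fv_none]
    · simp [inertPart, activePart, PreMap.toMiddleVertex, h]

theorem inertPart_comp_activePart : hf.inertPart.comp hf.activePart = f := by
  have hfv : hf.activePart.fv ∘ hf.inertPart.fv = f.fv := funext hf.activePart_inertPart_fv
  exact congrArg (PreMap.mk · f.fa) hfv

theorem activePart_fv_eq_none {x : Option hf.middleGraph.V} :
    hf.activePart.fv x = none ↔ x = none := by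
  rcases x with _ | v
  · exact iff_of_true hf.fv_none rfl
  · exact iff_of_false v.2 (Option.some_ne_none v)

theorem inertPart_fv_eq_none {x : Option G.V} : hf.inertPart.fv x = none ↔ f.fv x = none := by
  rw [← hf.activePart_fv_eq_none, hf.activePart_inertPart_fv]

theorem inertPart_fv_some (v : hf.middleGraph.V) : hf.inertPart.fv (some v.1) = some v :=
  dif_pos v.2

theorem inertPart_fv_surjective : Function.Surjective hf.inertPart.fv
  | none => ⟨none, rfl⟩
  | some v => ⟨some v.1, hf.inertPart_fv_some v⟩

theorem range_activePart_fv : Set.range hf.activePart.fv = Set.range f.fv := by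
  rw [← hf.inertPart_fv_surjective.range_comp]
  exact congrArg Set.range (funext hf.activePart_inertPart_fv)

theorem eq_of_inertPart_fv_eq {v v' : G.V} (hv : f.fv (some v) ≠ none)
    (h : hf.inertPart.fv (some v) = hf.inertPart.fv (some v')) : v = v' := by
  have hv' : f.fv (some v') ≠ none := by
    rwa [← hf.activePart_inertPart_fv, ← h, hf.activePart_inertPart_fv]
  rw [hf.inertPart_fv_some ⟨v, hv⟩, hf.inertPart_fv_some ⟨v', hv'⟩] at h
  exact congrArg Subtype.val (Option.some.inj h)

theorem middleGraph_t_eq_none {z : H.A} (hz : H.t z = none) :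
    hf.middleGraph.t (hf.activePart.fa z) = none :=
  if_pos ⟨z, rfl, hz⟩

theorem middleGraph_t_eq {z : H.A} (hz : H.t z = f.fv (G.t (f.fa z))) :
    hf.middleGraph.t (hf.activePart.fa z) = hf.inertPart.fv (G.t (f.fa z)) := by
  by_cases h : ∃ b, f.run b = f.run z ∧ H.t b = none
  · obtain ⟨b, hbz, hb⟩ := h
    obtain rfl := hf.eq_of_run_eq (hb ▸ hf.none_mem_range) ⟨_, hz.symm⟩ hbz
    rw [hf.middleGraph_t_eq_none hb, hf.inertPart_fv_eq_none.mpr (hz ▸ hb)]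
  · exact if_neg h

theorem activePart_fv_t (hG : G.Connected) {z : H.A} (hz : H.t z ∈ Set.range f.fv) :
    hf.activePart.fv (hf.middleGraph.t (hf.activePart.fa z)) = H.t z := by
  by_cases hne : H.t z = none
  · rw [hf.middleGraph_t_eq_none hne, hne, hf.activePart_fv_eq_none]
  · have ht := hf.t_eq_fv hG hne hz
    rw [hf.middleGraph_t_eq ht, hf.activePart_inertPart_fv, ← ht]

theorem activePart_fa_eq_iff {b c : H.A} :
    hf.activePart.fa b = hf.activePart.fa c ↔ f.run b = f.run c :=
  Sum.inr_injective.eq_iff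

theorem fiberList_activePart (hG : G.Connected) (b : H.A) :
    ∃ m, FiberList hf.activePart (hf.activePart.fa b) m := by
  obtain ⟨m, hb, hnodup, hchain, hhead, hlast⟩ := hf.exists_maximal_chain b
  have hmem (c : H.A) : c ∈ m ↔ hf.activePart.fa c = hf.activePart.fa b := by
    rw [hf.activePart_fa_eq_iff, hf.mem_maximal_chain_iff hchain hhead hlast hb]
  refine ⟨m, hmem, hnodup, (isBivalentPath_iff (List.ne_nil_of_mem hb)).mpr ⟨?_, ?_, ?_⟩⟩
  · exact hchain.imp fun _ _ h ↦ hf.consecutive_bivalentStep h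
  · intro h hh
    rw [← (hmem h).mp (List.mem_of_head? hh)]
    exact (hf.activePart_fv_t hG (hhead h hh)).symm
  · intro z hz
    rw [← (hmem z).mp (List.mem_of_getLast? hz), hf.activePart_fv_t hG (hlast z hz)]

theorem exists_middleGraph_path {l : List G.A} (hl : ∀ c ∈ l, c ∉ Set.range f.fa)
    {s e : Option G.V} (hs : f.fv s ≠ none) (hp : G.IsPath l s e) :
    ∃ l', (∀ c ∈ l', c ∉ Set.range hf.activePart.fa) ∧
      hf.middleGraph.IsPath l' (hf.inertPart.fv s) (hf.inertPart.fv e) := by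
  induction l generalizing s with
  | nil => exact ⟨[], by simp, congrArg _ hp⟩
  | cons a l ih =>
    obtain ⟨rfl, hp⟩ := hp
    rw [List.forall_mem_cons] at hl
    have ha : f.fv (G.t a) ≠ none := (hf.fv_t_dag hl.1).symm.trans_ne hs
    obtain ⟨l', hl', hp'⟩ := ih hl.2 ha hp
    refine ⟨Sum.inl ⟨a, hl.1, ha⟩ :: l', List.forall_mem_cons.mpr ⟨?_, hl'⟩, rfl, hp'⟩
    rintro ⟨b, hb⟩
    exact Sum.inr_ne_inl hb

theorem isGraphMap_activePart (hG : G.Connected) : IsGraphMap hf.activePart := by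
  refine isGraphMap_of_bivalent (fun _ ↦ rfl) hf.fv_none ?_ ?_ ?_
  · rintro (a | r)
    · refine ⟨[], by simp [activePart], List.nodup_nil, ?_, by simp⟩
      change hf.activePart.fv (hf.inertPart.fv _) = hf.activePart.fv (hf.inertPart.fv _)
      rw [hf.activePart_inertPart_fv, hf.activePart_inertPart_fv, hf.fv_t_dag a.2.1]
    · obtain ⟨b, rfl⟩ := f.run_surjective r
      exact hf.fiberList_activePart hG b
  · intro v v' h hne
    obtain ⟨l, hl, hp⟩ := hf.exists_path (v := v.1) (v' := v'.1) h hne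
    simpa only [hf.inertPart_fv_some] using hf.exists_middleGraph_path hl v.2 hp
  · intro w hw
    exact hf.bivalent (hf.range_activePart_fv ▸ hw)

theorem isActive_activePart : IsActive hf.activePart := by
  refine ⟨fun x ↦ hf.activePart_fv_eq_none.mp, fun x l hl ↦ ?_⟩
  have hmid : ∀ ⦃b c l₁ l₂⦄, l = l₁ ++ b :: c :: l₂ → H.t b ≠ none := by
    rintro b c l₁ l₂ rfl hb
    obtain ⟨z, hzb, hzx, hz⟩ := hl.exists_later_ne
    refine hzb (hf.eq_of_run_eq ?_ (hb ▸ hf.none_mem_range) ?_)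
    · rw [hz, ← hf.range_activePart_fv]
      exact Set.mem_range_self _
    · exact hf.activePart_fa_eq_iff.mp (hzx.trans ((hl.1 b).mp (by simp)).symm)
  exact List.isChain_iff_getElem.mp (List.isChain_iff_forall_rel_of_append_cons_cons.mpr hmid)

end IsGraphMap
end MiddleGraph

section InertPart

variable {f : PreMap G H}

namespace IsGraphMap
variable (hf : IsGraphMap f)

open Classical in
/-- The arcs of the middle graph over `a`, one for each arc of the `f`-fibre `l` of `a` that ends
at `∞` or at a vertex hit by `f`. -/
noncomputable def terminalRuns (l : List H.A) : List hf.middleGraph.A :=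
  (l.filter fun z ↦ H.t z ∈ Set.range f.fv).map hf.activePart.fa

theorem mem_terminalRuns {a : G.A} {l : List H.A} (hl : FiberList f a l) (ha : a ∈ Set.range f.fa)
    (x : hf.middleGraph.A) : x ∈ hf.terminalRuns l ↔ hf.inertPart.fa x = a := by
  simp only [terminalRuns, List.mem_map, List.mem_filter, decide_eq_true_eq]
  constructor
  · rintro ⟨z, ⟨hz, -⟩, rfl⟩
    exact (hl.1 z).mp hz
  · rcases x with e | r
    · rintro rfl
      exact absurd ha e.2.1
    · obtain ⟨b, rfl⟩ := f.run_surjective r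
      intro hb
      obtain ⟨m, hbm, -, hchain, -, hlast⟩ := hf.exists_maximal_chain b
      have hz := List.getLast?_eq_some_getLast (List.ne_nil_of_mem hbm)
      have hrun : f.run _ = f.run b := run_eq_of_isChain hchain (List.mem_of_getLast? hz) hbm
      refine ⟨_, ⟨(hl.1 _).mpr ?_, hlast _ hz⟩, congrArg Sum.inr hrun⟩
      exact (congrArg PreMap.Run.fa hrun).trans hb

theorem nodup_terminalRuns {l : List H.A} (hl : l.Nodup) : (hf.terminalRuns l).Nodup := by
  refine List.Nodup.map_on (fun y hy z hz h ↦ ?_) (hl.filter _)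
  simp only [List.mem_filter, decide_eq_true_eq] at hy hz
  exact hf.eq_of_run_eq hy.2 hz.2 (hf.activePart_fa_eq_iff.mp h)

theorem isBivalentPath_terminalRuns (hG : G.Connected) {a : G.A} {l₁ l₂ : List H.A} {b : H.A}
    (hl : FiberList f a (l₁ ++ b :: l₂)) :
    hf.middleGraph.IsBivalentPath (hf.terminalRuns (b :: l₂))
      (hf.middleGraph.t (hf.activePart.fa (H.dag b))) (hf.inertPart.fv (G.t a)) := by
  induction l₂ generalizing l₁ b with
  | nil =>
    have hb : H.t b = f.fv (G.t (f.fa b)) := by rw [hl.t_last, (hl.1 b).mp (by simp)]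
    have hruns : hf.terminalRuns [b] = [hf.activePart.fa b] := by
      simp [terminalRuns, hl.t_last]
    rw [hruns, isBivalentPath_singleton, hf.middleGraph_t_eq hb, (hl.1 b).mp (by simp)]
    exact ⟨rfl, rfl⟩
  | cons c l₂ ih =>
    have htail := ih (l₁ := l₁ ++ [b]) (by simpa using hl)
    have hbc := hl.bivalentStep
    by_cases hb : H.t b ∈ Set.range f.fv
    · have hruns : hf.terminalRuns (b :: c :: l₂) =
          hf.activePart.fa b :: hf.terminalRuns (c :: l₂) := by
        simp [terminalRuns, List.filter_cons, hb]
      have hnone : H.t b = none := by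
        by_contra hne
        exact hf.t_notMem_range_of_intermediate hG hl hne hb
      rw [hf.middleGraph_t_eq_none (hbc.1 ▸ hnone), ← hf.middleGraph_t_eq_none hnone] at htail
      rw [hruns]
      exact htail.cons (Or.inl (hf.middleGraph_t_eq_none hnone))
    · have hruns : hf.terminalRuns (b :: c :: l₂) = hf.terminalRuns (c :: l₂) := by
        simp [terminalRuns, hb]
      have hcons : f.Consecutive b c :=
        ⟨by rw [(hl.1 b).mp (by simp), (hl.1 c).mp (by simp)], hbc.1, hb⟩
      have hfa : hf.activePart.fa (H.dag c) = hf.activePart.fa (H.dag b) :=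
        congrArg Sum.inr (Quot.sound (hf.consecutive_dag hcons))
      rwa [hruns, ← hfa]

theorem fiberList_inertPart (hG : G.Connected) (a : G.A) :
    ∃ l, FiberList hf.inertPart a l := by
  by_cases ha : a ∈ Set.range f.fa
  · obtain ⟨l, hl⟩ := hf.exists_fiberList a
    obtain ⟨b, l', rfl⟩ : ∃ b l', l = b :: l' := by
      obtain ⟨b, hb⟩ := ha
      exact List.exists_cons_of_ne_nil (List.ne_nil_of_mem ((hl.1 b).mpr hb))
    refine ⟨_, hf.mem_terminalRuns hl ha, hf.nodup_terminalRuns hl.2.1, ?_⟩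
    have hstart := hf.middleGraph_t_eq (z := H.dag b)
      (by rw [hl.t_dag_head, hf.fa_dag, (hl.1 b).mp (by simp)])
    rw [hf.fa_dag, (hl.1 b).mp (by simp)] at hstart
    exact hstart ▸ hf.isBivalentPath_terminalRuns hG (l₁ := []) hl
  have hmem (x : hf.middleGraph.A) (hx : hf.inertPart.fa x = a) :
      ∃ h, x = Sum.inl ⟨a, ha, h⟩ := by
    rcases x with e | r
    · subst hx
      exact ⟨e.2.2, rfl⟩
    · obtain ⟨b, rfl⟩ := f.run_surjective r
      exact absurd ⟨b, hx⟩ ha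
  by_cases hne : f.fv (G.t a) = none
  · have hdag : hf.inertPart.fv (G.t (G.dag a)) = hf.inertPart.fv (G.t a) := by
      rw [hf.inertPart_fv_eq_none.mpr hne, hf.inertPart_fv_eq_none, hf.fv_t_dag ha, hne]
    refine ⟨[], fun x ↦ ?_, List.nodup_nil, hdag, by simp⟩
    simpa using fun hx ↦ (hmem x hx).1 hne
  · let x₀ : hf.middleGraph.A := Sum.inl ⟨a, ha, hne⟩
    refine ⟨[x₀], fun x ↦ List.mem_singleton.trans ⟨?_, fun hx ↦ (hmem x hx).2⟩,
      List.nodup_singleton _, isBivalentPath_singleton.mpr ⟨rfl, rfl⟩⟩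
    rintro rfl
    rfl

theorem isGraphMap_inertPart (hG : G.Connected) : IsGraphMap hf.inertPart := by
  refine isGraphMap_of_bivalent ?_ rfl (hf.fiberList_inertPart hG) ?_ ?_
  · rintro (e | r)
    · rfl
    · obtain ⟨b, rfl⟩ := f.run_surjective r
      exact hf.fa_dag b
  · intro v v' h hne
    rw [Ne, hf.inertPart_fv_eq_none] at hne
    exact ⟨[], by simp, congrArg some (hf.eq_of_inertPart_fv_eq hne h)⟩
  · exact fun w hw ↦ absurd (hf.inertPart_fv_surjective (some w)) hw

theorem isInert_inertPart : IsInert hf.inertPart := by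
  refine ⟨fun w ↦ ⟨w.1, hf.inertPart_fv_some w, fun v hv ↦ ?_⟩, fun a ha ↦ ?_⟩
  · exact (hf.eq_of_inertPart_fv_eq w.2 ((hf.inertPart_fv_some w).trans hv.symm)).symm
  · rw [hf.inertPart_fv_eq_none]
    by_contra hne
    by_cases hfa : a ∈ Set.range f.fa
    · obtain ⟨b, hb⟩ := hfa
      exact ha (hf.activePart.fa b) hb
    · exact ha (Sum.inl ⟨a, hfa, hne⟩) rfl

end IsGraphMap
end InertPart

section Components

/-- The connected component of a vertex or an arc. -/
def component (G : CGraph) (x : G.V ⊕ G.A) : Quot G.Touch := Quot.mk _ x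

theorem connected_iff_component :
    G.Connected ↔ Nonempty (G.V ⊕ G.A) ∧ ∀ x y, G.component x = G.component y :=
  and_congr_right fun _ ↦ forall₂_congr fun _ _ ↦ ⟨Quot.eqvGen_sound, Quot.eqvGen_exact⟩

theorem component_dag (a : G.A) : G.component (.inr (G.dag a)) = G.component (.inr a) :=
  (Quot.sound (.dag a)).symm

theorem component_t {a : G.A} {v : G.V} (h : G.t a = some v) :
    G.component (.inr a) = G.component (.inl v) :=
  Quot.sound (.incid a v h)

theorem IsPath.component_eq {l : List G.A} {v v' : G.V} (hp : G.IsPath l (some v) (some v'))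
    (hl : ∀ a ∈ l, G.t a ≠ none) : G.component (.inl v) = G.component (.inl v') := by
  induction l generalizing v with
  | nil => exact congrArg _ (congrArg _ (Option.some.inj hp))
  | cons a l ih =>
    rw [List.forall_mem_cons] at hl
    obtain ⟨u, hu⟩ := Option.ne_none_iff_exists'.mp hl.1
    rw [← component_t hp.1, component_dag, component_t hu]
    exact ih (hu ▸ hp.2) hl.2

/-- Everything in the source of `p` that lies over the vertex or arc `x` of the target belongs to
the component `c`; over a vertex, this includes the arcs whose fibres pass through that vertex. -/
def PreMap.OverComponent (p : PreMap S H) (c : Quot S.Touch) : H.V ⊕ H.A → Prop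
  | .inl w => (∀ v, p.fv (some v) = some w → S.component (.inl v) = c) ∧
      ∀ b, H.t b = some w → S.component (.inr (p.fa b)) = c
  | .inr b => S.component (.inr (p.fa b)) = c

variable {p : PreMap S H} (hp : IsGraphMap p) (hcollapsed : ∀ x, x ∉ Set.range p.fa → S.t x ≠ none)
include hp hcollapsed

theorem IsGraphMap.component_eq_of_fv_eq {v v' : S.V} (h : p.fv (some v) = p.fv (some v'))
    (hne : p.fv (some v) ≠ none) : S.component (.inl v) = S.component (.inl v') := by
  obtain ⟨l, hl, hpath⟩ := hp.exists_path h hne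
  exact hpath.component_eq fun a ha ↦ hcollapsed a (hl a ha)

variable (ht : ∀ b, H.t b ∈ Set.range p.fv → p.fv (S.t (p.fa b)) = H.t b)
include ht

theorem IsGraphMap.component_fa_eq_of_fv_eq {v : S.V} {b : H.A} (hb : p.fv (some v) = H.t b)
    (hne : H.t b ≠ none) : S.component (.inr (p.fa b)) = S.component (.inl v) := by
  have hpt := ht b ⟨_, hb⟩
  obtain ⟨u, hu⟩ := Option.ne_none_iff_exists'.mp
    fun h : S.t (p.fa b) = none ↦ hne (by rw [← hpt, h, hp.fv_none])
  rw [component_t hu]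
  exact hp.component_eq_of_fv_eq hcollapsed (by rw [← hu, hpt, hb]) (by rwa [← hu, hpt])

theorem IsGraphMap.component_fa_eq {b c : H.A} (hbc : H.t b = H.t c) (hne : H.t b ≠ none) :
    S.component (.inr (p.fa b)) = S.component (.inr (p.fa c)) := by
  by_cases hb : H.t b ∈ Set.range p.fv
  · obtain ⟨_ | v, hv⟩ := hb
    · exact absurd (hv.symm.trans hp.fv_none) hne
    · rw [hp.component_fa_eq_of_fv_eq hcollapsed ht hv hne,
        hp.component_fa_eq_of_fv_eq hcollapsed ht (hv.trans hbc) (hbc ▸ hne)]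
  · obtain ⟨w, hw, hbiv⟩ := hp.exists_bivalent hb
    obtain ⟨l, hl⟩ := hp.exists_fiberList (p.fa b)
    obtain ⟨l₁, d, l₂, rfl⟩ := hl.exists_next ((hl.1 b).mpr rfl) hb
    have hd : p.fa d = p.fa b := (hl.1 d).mp (by simp)
    rcases eq_or_eq_dag_of_bivalent hp.fa_dag hbiv hd.symm hl.bivalentStep.1 hw
      (hbc.symm.trans hw) with rfl | rfl
    · rfl
    · rw [hp.fa_dag, component_dag, hd]

theorem IsGraphMap.overComponent_iff_of_touch (c : Quot S.Touch) {x y : H.V ⊕ H.A}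
    (hxy : H.Touch x y) : p.OverComponent c x ↔ p.OverComponent c y := by
  rcases hxy with b | ⟨b, w, hb⟩
  · simp only [PreMap.OverComponent, hp.fa_dag, component_dag]
  · refine ⟨fun h ↦ ⟨fun v hv ↦ ?_, fun d hd ↦ ?_⟩, fun h ↦ h.2 b hb⟩
    · rw [← hb] at hv
      rw [← hp.component_fa_eq_of_fv_eq hcollapsed ht hv (by simp [hb])]
      exact h
    · rw [hp.component_fa_eq hcollapsed ht (hd.trans hb.symm) (by simp [hd])]
      exact h

theorem IsGraphMap.exists_overComponent (hne : Nonempty (H.V ⊕ H.A)) :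
    ∃ c x, p.OverComponent c x := by
  have harc (b : H.A) : ∃ c x, p.OverComponent c x := ⟨_, .inr b, rfl⟩
  obtain ⟨w | b⟩ := hne
  · by_cases hw : some w ∈ Set.range p.fv
    · obtain ⟨_ | v, hv⟩ := hw
      · simp [hp.fv_none] at hv
      · refine ⟨S.component (.inl v), .inl w, fun v' hv' ↦ ?_, fun b hb ↦ ?_⟩
        · exact hp.component_eq_of_fv_eq hcollapsed (hv'.trans hv.symm) (by simp [hv'])
        · exact hp.component_fa_eq_of_fv_eq hcollapsed ht (hv.trans hb.symm) (by simp [hb])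
    · exact harc (hp.bivalent hw).exists_arc.choose
  · exact harc b

theorem IsGraphMap.connected_source (hH : H.Connected) (hnone : ∀ x, p.fv x = none → x = none) :
    S.Connected := by
  obtain ⟨c, x₀, hx₀⟩ := hp.exists_overComponent hcollapsed ht hH.1
  have hall : ∀ x, p.OverComponent c x :=
    hH.forall_of_touch (fun _ _ ↦ hp.overComponent_iff_of_touch hcollapsed ht c) hx₀
  have hvert (v : S.V) : S.component (.inl v) = c := by
    obtain ⟨w, hw⟩ := Option.ne_none_iff_exists'.mp
      fun h : p.fv (some v) = none ↦ Option.some_ne_none v (hnone _ h)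
    exact (hall (.inl w)).1 v hw
  have harc (x : S.A) : S.component (.inr x) = c := by
    by_cases hx : x ∈ Set.range p.fa
    · obtain ⟨b, rfl⟩ := hx
      exact hall (.inr b)
    · obtain ⟨v, hv⟩ := Option.ne_none_iff_exists'.mp (hcollapsed x hx)
      rw [component_t hv, hvert]
  refine connected_iff_component.mpr ⟨⟨(Quot.exists_rep c).choose⟩, ?_⟩
  rintro (v | x) (v' | x') <;> simp only [hvert, harc]

end Components

theorem IsGraphMap.connected_middleGraph {f : PreMap G H} (hf : IsGraphMap f) (hG : G.Connected)
    (hH : H.Connected) : hf.middleGraph.Connected := by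
  refine (hf.isGraphMap_activePart hG).connected_source ?_
    (fun b hb ↦ hf.activePart_fv_t hG (hf.range_activePart_fv ▸ hb)) hH
    (fun x ↦ hf.activePart_fv_eq_none.mp)
  rintro (e | r) hx
  · exact mt hf.inertPart_fv_eq_none.mp e.2.2
  · obtain ⟨b, rfl⟩ := f.run_surjective r
    exact absurd ⟨b, rfl⟩ hx

theorem isGraphMap_of_inverse {e : PreMap S S'} {g : PreMap S' S} (heg : e.comp g = PreMap.id S)
    (hge : g.comp e = PreMap.id S') (hnone : e.fv none = none)
    (hdag : ∀ x, e.fa (S'.dag x) = S.dag (e.fa x)) (ht : ∀ x, e.fv (S.t (e.fa x)) = S'.t x) :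
    IsGraphMap e := by
  have hgev : Function.LeftInverse g.fv e.fv := congrFun (congrArg PreMap.fv heg)
  have hegv : Function.RightInverse g.fv e.fv := congrFun (congrArg PreMap.fv hge)
  have hega : Function.LeftInverse e.fa g.fa := congrFun (congrArg PreMap.fa heg)
  have hgea : Function.RightInverse e.fa g.fa := congrFun (congrArg PreMap.fa hge)
  refine isGraphMap_of_bivalent hdag hnone (fun a ↦ ⟨[g.fa a], fun x ↦ ?_,
    List.nodup_singleton _, ?_⟩) (fun v v' h _ ↦ ⟨[], by simp, hgev.injective h⟩)
    fun w hw ↦ absurd (hegv.surjective (some w)) hw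
  · rw [List.mem_singleton]
    exact ⟨fun h ↦ h ▸ hega a, fun h ↦ h ▸ (hgea x).symm⟩
  · rw [isBivalentPath_singleton, ← ht, ← ht, hdag, hega]
    exact ⟨rfl, rfl⟩

/-- A factorization `f = p ∘ i` through a connected graph with `i` inert and `p` active. -/
structure IsInertActiveFactorization (f : PreMap G H) (i : PreMap G S) (p : PreMap S H) : Prop where
  connected : S.Connected
  isGraphMap_left : IsGraphMap i
  isInert : IsInert i
  isGraphMap_right : IsGraphMap p
  isActive : IsActive p
  comp_eq : i.comp p = f

namespace IsInertActiveFactorization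

variable {f : PreMap G H} {i : PreMap G S} {p : PreMap S H}

section Single

variable (F : IsInertActiveFactorization f i p)
include F

theorem fv_fv (x : Option G.V) : p.fv (i.fv x) = f.fv x := congrFun (congrArg PreMap.fv F.comp_eq) x

theorem fa_fa (b : H.A) : i.fa (p.fa b) = f.fa b := congrFun (congrArg PreMap.fa F.comp_eq) b

theorem right_fv_eq_none {x : Option S.V} : p.fv x = none ↔ x = none :=
  ⟨F.isActive.1 x, fun h ↦ h ▸ F.isGraphMap_right.fv_none⟩

theorem left_fv_eq_none {x : Option G.V} : i.fv x = none ↔ f.fv x = none := by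
  rw [← F.fv_fv, F.right_fv_eq_none]

theorem left_fv_surjective : Function.Surjective i.fv
  | none => ⟨none, F.isGraphMap_left.fv_none⟩
  | some w => (F.isInert.1 w).exists.imp' some fun _ h ↦ h

theorem range_right_fv : Set.range p.fv = Set.range f.fv := by
  rw [← F.left_fv_surjective.range_comp]
  exact congrArg Set.range (funext F.fv_fv)

theorem t_ne_none_of_intermediate {x : S.A} {l₁ l₂ : List H.A} {b c : H.A}
    (hl : FiberList p x (l₁ ++ b :: c :: l₂)) : H.t b ≠ none := by
  have hmid := List.isChain_iff_getElem (R := fun b _ ↦ H.t b ≠ none) |>.mpr (F.isActive.2 x _ hl)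
  exact (List.isChain_append_cons_cons.mp hmid).2.1

theorem t_eq_none_of_intermediate (hG : G.Connected) {a : G.A} {l₁ l₂ : List S.A} {x y : S.A}
    (hl : FiberList i a (l₁ ++ x :: y :: l₂)) : S.t x = none := by
  by_contra hne
  exact F.isGraphMap_left.t_notMem_range_of_intermediate hG hl hne (F.left_fv_surjective _)

theorem t_eq (hG : G.Connected) {x : S.A} (hx : S.t x ≠ none) : S.t x = i.fv (G.t (i.fa x)) :=
  F.isGraphMap_left.t_eq_fv hG hx (F.left_fv_surjective _)

theorem t_ne_none_of_notMem_range (hH : Nonempty (H.V ⊕ H.A)) {x : S.A}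
    (hx : x ∉ Set.range p.fa) : S.t x ≠ none := by
  intro hnone
  let P : S.V ⊕ S.A → Prop :=
    Sum.elim (fun _ ↦ False) fun y ↦ y ∉ Set.range p.fa ∧ S.t y = none
  have hdag {y : S.A} (hy : P (.inr y)) : P (.inr (S.dag y)) := by
    refine ⟨mt F.isGraphMap_right.dag_mem_range_iff.mp hy.1, F.right_fv_eq_none.mp ?_⟩
    rw [F.isGraphMap_right.fv_t_dag hy.1, hy.2, F.isGraphMap_right.fv_none]
  have hP : ∀ y z, S.Touch y z → (P y ↔ P z) := by
    rintro _ _ (y | ⟨y, v, hv⟩)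
    · exact ⟨hdag, fun h ↦ S.dag_dag y ▸ hdag h⟩
    · simp [P, hv]
  have hall : ∀ y, P y := F.connected.forall_of_touch hP (x₀ := .inr x) ⟨hx, hnone⟩
  have hempty (b : H.A) : False := (hall (.inr (p.fa b))).1 ⟨b, rfl⟩
  obtain ⟨w | b⟩ := hH
  · refine hempty (F.isGraphMap_right.bivalent (w := w) ?_).exists_arc.choose
    rintro ⟨_ | v, hv⟩
    · simp [F.isGraphMap_right.fv_none] at hv
    · exact hall (.inl v)
  · exact hempty b

theorem t_eq_none_iff (hH : Nonempty (H.V ⊕ H.A)) {x : S.A} :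
    S.t x = none ↔ ∃ b, p.fa b = x ∧ H.t b = none := by
  constructor
  · intro hx
    obtain ⟨b, rfl⟩ : x ∈ Set.range p.fa := by
      by_contra h
      exact F.t_ne_none_of_notMem_range hH h hx
    obtain ⟨l, hl⟩ := F.isGraphMap_right.exists_fiberList (p.fa b)
    obtain ⟨z, hz, hzt⟩ :=
      hl.exists_mem_suffix (l := []) (List.ne_nil_of_mem ((hl.1 b).mpr rfl))
    exact ⟨z, (hl.1 z).mp hz, by rw [hzt, hx, F.isGraphMap_right.fv_none]⟩
  · rintro ⟨b, rfl, hb⟩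
    obtain ⟨l, hl⟩ := F.isGraphMap_right.exists_fiberList (p.fa b)
    obtain ⟨l₁, l₂, rfl⟩ := List.append_of_mem ((hl.1 b).mpr rfl)
    cases l₂ with
    | nil => exact F.right_fv_eq_none.mp (hl.t_last.symm.trans hb)
    | cons c l₂ => exact absurd hb (F.t_ne_none_of_intermediate hl)

theorem eq_of_left_fa_eq (hG : G.Connected) (hH : Nonempty (H.V ⊕ H.A)) {x y : S.A}
    (hx : x ∉ Set.range p.fa) (hxy : i.fa y = i.fa x) : y = x := by
  have ht : S.t x ≠ none := F.t_ne_none_of_notMem_range hH hx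
  have ht' : S.t (S.dag x) ≠ none :=
    F.t_ne_none_of_notMem_range hH (mt F.isGraphMap_right.dag_mem_range_iff.mp hx)
  obtain ⟨l, hl⟩ := F.isGraphMap_left.exists_fiberList (i.fa x)
  have hy : y ∈ l := (hl.1 y).mpr hxy
  obtain ⟨l₁, l₂, rfl⟩ := List.append_of_mem ((hl.1 x).mpr rfl)
  cases l₂ with
  | cons z l₂ => exact absurd (F.t_eq_none_of_intermediate hG hl) ht
  | nil =>
    rcases List.eq_nil_or_concat l₁ with rfl | ⟨l, z, rfl⟩
    · simpa using hy
    · rw [List.concat_eq_append, List.append_assoc] at hl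
      exact absurd (hl.bivalentStep.1.symm.trans (F.t_eq_none_of_intermediate hG hl)) ht'

theorem left_fa_mem_range_iff (hG : G.Connected) (hH : Nonempty (H.V ⊕ H.A)) {x : S.A} :
    i.fa x ∈ Set.range f.fa ↔ x ∈ Set.range p.fa := by
  constructor
  · rintro ⟨b, hb⟩
    by_contra hx
    exact hx ⟨b, F.eq_of_left_fa_eq hG hH hx ((F.fa_fa b).trans hb)⟩
  · rintro ⟨b, rfl⟩
    exact ⟨b, (F.fa_fa b).symm⟩

theorem right_fa_eq_iff (hf : IsGraphMap f) {b c : H.A} : p.fa b = p.fa c ↔ f.run b = f.run c := by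
  constructor
  · intro h
    obtain ⟨l, hl⟩ := F.isGraphMap_right.exists_fiberList (p.fa c)
    have hchain : l.IsChain f.Consecutive := by
      refine List.isChain_iff_forall_rel_of_append_cons_cons.mpr ?_
      rintro y z l₁ l₂ rfl
      refine ⟨?_, hl.bivalentStep.1, ?_⟩
      · rw [← F.fa_fa, ← F.fa_fa, (hl.1 y).mp (by simp), (hl.1 z).mp (by simp)]
      · rw [← F.range_right_fv]
        exact F.isGraphMap_right.t_notMem_range_of_intermediate F.connected hl
          (F.t_ne_none_of_intermediate hl)
    exact run_eq_of_isChain hchain ((hl.1 b).mpr h) ((hl.1 c).mpr rfl)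
  · refine fun h ↦ congrArg (Quot.lift p.fa fun y z hyz ↦ ?_) h
    obtain ⟨l, hl⟩ := F.isGraphMap_right.exists_fiberList (p.fa y)
    have hy : H.t y ∉ Set.range p.fv := F.range_right_fv ▸ hyz.2.2
    obtain ⟨l₁, d, l₂, rfl⟩ := hl.exists_next ((hl.1 y).mpr rfl) hy
    have hd : p.fa d = p.fa y := (hl.1 d).mp (by simp)
    have hyd : f.Consecutive y d :=
      ⟨by rw [← F.fa_fa, ← F.fa_fa, hd], hl.bivalentStep.1, hyz.2.2⟩
    rw [← hd, hf.consecutive_rightUnique hyz hyd]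

end Single

section Comparison

variable {i' : PreMap G S'} {p' : PreMap S' H}

/-- The arcs `x` and `x'` of the middle graphs of two factorizations have the same image in `G` and
the same fibre in `H`. -/
def ArcCorr (i : PreMap G S) (p : PreMap S H) (i' : PreMap G S') (p' : PreMap S' H)
    (x : S.A) (x' : S'.A) : Prop :=
  i.fa x = i'.fa x' ∧ ∀ b, p.fa b = x ↔ p'.fa b = x'

variable (F : IsInertActiveFactorization f i p) (F' : IsInertActiveFactorization f i' p')
include F

theorem eq_of_arcCorr (hG : G.Connected) (hH : Nonempty (H.V ⊕ H.A)) {x y : S.A} {x' : S'.A}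
    (hx : ArcCorr i p i' p' x x') (hy : ArcCorr i p i' p' y x') : x = y := by
  by_cases h : x ∈ Set.range p.fa
  · obtain ⟨b, rfl⟩ := h
    exact (hy.2 b).mpr ((hx.2 b).mp rfl)
  · exact (F.eq_of_left_fa_eq hG hH h (hy.1.trans hx.1.symm)).symm

include F'

theorem arcCorr_dag {x : S.A} {x' : S'.A} (h : ArcCorr i p i' p' x x') :
    ArcCorr i p i' p' (S.dag x) (S'.dag x') := by
  refine ⟨by rw [F.isGraphMap_left.fa_dag, F'.isGraphMap_left.fa_dag, h.1], fun b ↦ ?_⟩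
  have hb := h.2 (H.dag b)
  rwa [F.isGraphMap_right.fa_dag, F'.isGraphMap_right.fa_dag, S.dag_involutive.eq_iff,
    S'.dag_involutive.eq_iff] at hb

theorem arcCorr_of_comp_eq (hG : G.Connected) (hH : Nonempty (H.V ⊕ H.A)) (hf : IsGraphMap f)
    {e : PreMap S S'} (hi : i.comp e = i') (hp : e.comp p' = p) (x' : S'.A) :
    ArcCorr i p i' p' (e.fa x') x' := by
  have hefa (b : H.A) : e.fa (p'.fa b) = p.fa b := congrFun (congrArg PreMap.fa hp) b
  have hifa : i.fa (e.fa x') = i'.fa x' := congrFun (congrArg PreMap.fa hi) x'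
  refine ⟨hifa, fun b ↦ ⟨fun hb ↦ ?_, fun hb ↦ hb ▸ (hefa b).symm⟩⟩
  obtain ⟨c, rfl⟩ : x' ∈ Set.range p'.fa :=
    (F'.left_fa_mem_range_iff hG hH).mp ⟨b, by rw [← F.fa_fa, hb, hifa]⟩
  rw [F'.right_fa_eq_iff hf, ← F.right_fa_eq_iff hf, hb, hefa]

theorem exists_arcCorr (hG : G.Connected) (hH : Nonempty (H.V ⊕ H.A)) (hf : IsGraphMap f)
    (x' : S'.A) : ∃ x, ArcCorr i p i' p' x x' := by
  by_cases hx' : x' ∈ Set.range p'.fa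
  · obtain ⟨b, rfl⟩ := hx'
    refine ⟨p.fa b, by rw [F.fa_fa, F'.fa_fa], fun c ↦ ?_⟩
    rw [F.right_fa_eq_iff hf, F'.right_fa_eq_iff hf]
  · obtain ⟨x, hx⟩ : i'.fa x' ∈ Set.range i.fa := by
      by_contra h
      have hnone := F.isInert.2 (i'.fa x') fun x hx ↦ h ⟨x, hx⟩
      have ht := F'.t_ne_none_of_notMem_range hH hx'
      rw [F.left_fv_eq_none, ← F'.left_fv_eq_none, ← F'.t_eq hG ht] at hnone
      exact ht hnone
    have hxp : x ∉ Set.range p.fa := by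
      rwa [← F.left_fa_mem_range_iff hG hH, hx, F'.left_fa_mem_range_iff hG hH]
    exact ⟨x, hx, fun b ↦ iff_of_false (fun h ↦ hxp ⟨b, h⟩) fun h ↦ hx' ⟨b, h⟩⟩

theorem left_fv_eq_of_left_fv_eq {x y : Option G.V} (h : i.fv x = i.fv y) : i'.fv x = i'.fv y := by
  by_cases hx : i.fv x = none
  · have hy : i.fv y = none := h ▸ hx
    rw [F.left_fv_eq_none, ← F'.left_fv_eq_none] at hx hy
    rw [hx, hy]
  · obtain ⟨w, hw⟩ := Option.ne_none_iff_exists'.mp hx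
    have hsome {z : Option G.V} (hz : i.fv z = some w) : ∃ v, z = some v :=
      Option.ne_none_iff_exists'.mp fun hz' ↦ by simp [hz', F.isGraphMap_left.fv_none] at hz
    obtain ⟨v, rfl⟩ := hsome hw
    obtain ⟨v', rfl⟩ := hsome (h ▸ hw)
    rw [(F.isInert.1 w).unique hw (h ▸ hw)]

theorem exists_comp_eq (hG : G.Connected) (hH : Nonempty (H.V ⊕ H.A)) (hf : IsGraphMap f) :
    ∃ e : PreMap S S', i.comp e = i' ∧ e.comp p' = p := by
  choose φ hφ using F.exists_arcCorr F' hG hH hf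
  choose σ hσ using F.left_fv_surjective
  have hv (x : Option G.V) : i'.fv (σ (i.fv x)) = i'.fv x :=
    F.left_fv_eq_of_left_fv_eq F' (hσ (i.fv x))
  refine ⟨⟨i'.fv ∘ σ, φ⟩, ?_, ?_⟩
  · exact congrArg₂ PreMap.mk (funext hv) (funext fun x' ↦ (hφ x').1)
  · refine congrArg₂ PreMap.mk (funext fun s ↦ ?_) (funext fun b ↦ ?_)
    · rw [← hσ s, F.fv_fv, ← F'.fv_fv, ← hv]
      rfl
    · exact (((hφ (p'.fa b)).2 b).mpr rfl).symm

theorem eq_of_comp_eq (hG : G.Connected) (hH : Nonempty (H.V ⊕ H.A)) (hf : IsGraphMap f)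
    {e g : PreMap S S'} (hei : i.comp e = i') (hep : e.comp p' = p) (hgi : i.comp g = i')
    (hgp : g.comp p' = p) : e = g := by
  have hfv : e.fv = g.fv := by
    rw [← F.left_fv_surjective.right_cancellable]
    exact congrArg PreMap.fv (hei.trans hgi.symm)
  have hfa : e.fa = g.fa := funext fun x' ↦ F.eq_of_arcCorr hG hH
    (F.arcCorr_of_comp_eq F' hG hH hf hei hep x') (F.arcCorr_of_comp_eq F' hG hH hf hgi hgp x')
  exact congrArg₂ PreMap.mk hfv hfa

theorem fv_t_eq_of_arcCorr (hG : G.Connected) (hH : Nonempty (H.V ⊕ H.A)) {e : PreMap S S'}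
    (hi : i.comp e = i') {x : S.A} {x' : S'.A} (h : ArcCorr i p i' p' x x') :
    e.fv (S.t x) = S'.t x' := by
  have hifv (y : Option G.V) : e.fv (i.fv y) = i'.fv y := congrFun (congrArg PreMap.fv hi) y
  have hiff : S.t x = none ↔ S'.t x' = none := by
    simp only [F.t_eq_none_iff hH, F'.t_eq_none_iff hH, h.2]
  by_cases hx : S.t x = none
  · rw [hx, hiff.mp hx, ← F.isGraphMap_left.fv_none, hifv, F'.isGraphMap_left.fv_none]
  · rw [F.t_eq hG hx, F'.t_eq hG (mt hiff.mpr hx), hifv, h.1]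

theorem isGraphMap_of_comp_eq (hG : G.Connected) (hH : Nonempty (H.V ⊕ H.A)) (hf : IsGraphMap f)
    {e : PreMap S S'} (hi : i.comp e = i') (hp : e.comp p' = p) {g : PreMap S' S}
    (heg : e.comp g = PreMap.id S) (hge : g.comp e = PreMap.id S') : IsGraphMap e := by
  have hcorr := F.arcCorr_of_comp_eq F' hG hH hf hi hp
  refine isGraphMap_of_inverse heg hge ?_ (fun x ↦ ?_)
    fun x ↦ F.fv_t_eq_of_arcCorr F' hG hH hi (hcorr x)
  · rw [← F'.isGraphMap_left.fv_none, ← hi]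
    exact congrArg e.fv F.isGraphMap_left.fv_none.symm
  · exact F.eq_of_arcCorr hG hH (hcorr (S'.dag x)) (F.arcCorr_dag F' (hcorr x))

theorem existsUnique_isGraphIso (hG : G.Connected) (hH : Nonempty (H.V ⊕ H.A))
    (hf : IsGraphMap f) : ∃! e : PreMap S S', IsGraphIso e ∧ i.comp e = i' ∧ e.comp p' = p := by
  obtain ⟨e, hei, hep⟩ := F.exists_comp_eq F' hG hH hf
  obtain ⟨g, hgi, hgp⟩ := F'.exists_comp_eq F hG hH hf
  have heg : e.comp g = PreMap.id S := by
    refine F.eq_of_comp_eq F hG hH hf ?_ ?_ rfl rfl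
    · exact (congrArg (PreMap.comp · g) hei).trans hgi
    · exact (congrArg (PreMap.comp e) hgp).trans hep
  have hge : g.comp e = PreMap.id S' := by
    refine F'.eq_of_comp_eq F' hG hH hf ?_ ?_ rfl rfl
    · exact (congrArg (PreMap.comp · e) hgi).trans hei
    · exact (congrArg (PreMap.comp g) hep).trans hgp
  refine ⟨e, ⟨⟨?_, g, ?_, heg, hge⟩, hei, hep⟩, fun e' he' ↦ ?_⟩
  · exact F.isGraphMap_of_comp_eq F' hG hH hf hei hep heg hge
  · exact F'.isGraphMap_of_comp_eq F hG hH hf hgi hgp hge heg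
  · exact F.eq_of_comp_eq F' hG hH hf he'.2.1 he'.2.2 hei hep

end Comparison
end IsInertActiveFactorization

end CGraph

open CGraph in
theorem inert_active_factorization (G H : CGraph) (hG : G.Connected) (hH : H.Connected)
    (f : PreMap G H) (hf : IsGraphMap f) :
    (∃ (S : CGraph) (_ : S.Connected) (i : PreMap G S) (p : PreMap S H),
      IsGraphMap i ∧ IsInert i ∧ IsGraphMap p ∧ IsActive p ∧ i.comp p = f) ∧
    (∀ (S S' : CGraph), S.Connected → S'.Connected →
      ∀ (i : PreMap G S) (p : PreMap S H) (i' : PreMap G S') (p' : PreMap S' H),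
        IsGraphMap i → IsInert i → IsGraphMap p → IsActive p → i.comp p = f →
        IsGraphMap i' → IsInert i' → IsGraphMap p' → IsActive p' → i'.comp p' = f →
        ∃! e : PreMap S S', IsGraphIso e ∧ i.comp e = i' ∧ e.comp p' = p) := by
  constructor
  · exact ⟨hf.middleGraph, hf.connected_middleGraph hG hH, hf.inertPart, hf.activePart,
      hf.isGraphMap_inertPart hG, hf.isInert_inertPart, hf.isGraphMap_activePart hG,
      hf.isActive_activePart, hf.inertPart_comp_activePart⟩
  · intro S S' hS hS' i p i' p' hi hi_inert hp hp_active hcomp hi' hi'_inert hp' hp'_active hcomp'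
    have F : IsInertActiveFactorization f i p := ⟨hS, hi, hi_inert, hp, hp_active, hcomp⟩
    have F' : IsInertActiveFactorization f i' p' := ⟨hS', hi', hi'_inert, hp', hp'_active, hcomp'⟩
    exact F.existsUnique_isGraphIso F' hG hH.1 hf
end

section
/- For composable combinatorial graph maps f : Γ → Λ and g : Λ → Ξ between connected graphs and every vertex u of Ξ, one has b₁((g ∘ f)⁻¹(u)) = b₁(g⁻¹(u)) + Σ_{w ∈ V_Λ, g_v(w) = u} b₁(f⁻¹(w)). Consequently the assignment gr(Γ) = Map(V_Γ, ℕ), with gr(f)(α)(w) = b₁(f⁻¹(w)) + Σ_{v ∈ f_v⁻¹(w)} α(v) for each vertex w of Λ, is a functor from the category of connected graphs and combinatorial graph maps to Set (the grading modular operad). -/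
namespace CGraph

/-- The condition for an arc of `Γ` to belong to the fiber of a pre-map `f : Γ → Λ`
over a vertex `w` of `Λ`: the arc (and its `†`-partner) is not in the image of `f_a`,
and both of its endpoints are vertices lying in `f_v⁻¹(w)`. -/
def FiberArc {G H : CGraph} (f : PreMap G H) (w : H.V) (a : G.A) : Prop :=
  a ∉ Set.range f.fa ∧ G.dag a ∉ Set.range f.fa ∧
    (∃ v, G.t a = some v ∧ f.fv (some v) = some w) ∧
    (∃ v, G.t (G.dag a) = some v ∧ f.fv (some v) = some w)

/-- The fiber `f⁻¹(w)` of a pre-map `f : Γ → Λ` over a vertex `w` of `Λ`: the subgraph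
of `Γ` with vertex set `f_v⁻¹(w)` and arc set the arcs outside the image of `f_a` with
both endpoints in `f_v⁻¹(w)`. -/
noncomputable def fiber {G H : CGraph} (f : PreMap G H) (w : H.V) : CGraph where
  V := {v : G.V // f.fv (some v) = some w}
  A := {a : G.A // FiberArc f w a}
  fintypeV := Fintype.ofFinite _
  fintypeA := Fintype.ofFinite _
  dag a := ⟨G.dag a.1, a.2.2.1, by rw [G.dag_dag]; exact a.2.1, a.2.2.2.2, by
    rw [G.dag_dag]; exact a.2.2.2.1⟩
  dag_dag a := Subtype.ext (G.dag_dag a.1)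
  dag_ne a h := G.dag_ne a.1 (congrArg Subtype.val h)
  t a := some ⟨a.2.2.2.1.choose, a.2.2.2.1.choose_spec.2⟩

end CGraph

namespace CGraph

/-- The first Betti number of a finite graph:
`#edges − #vertices + #components` (one summand per connected component; `0` for the
empty graph).  Edges are pairs `{a, a†}` of arcs, and connected components are the
equivalence classes of `V ⊔ A` under the equivalence relation generated by `Touch`. -/
noncomputable def b1 (G : CGraph) : ℕ :=
  Fintype.card G.A / 2 + Nat.card (Quot G.Touch) - Fintype.card G.V

end CGraph

namespace CGraph

open Classical in
/-- The value of the grading modular operad on a graph map: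
`gr(f)(α)(w) = b₁(f⁻¹(w)) + Σ_{v ∈ f_v⁻¹(w)} α(v)`. -/
noncomputable def grMap {G H : CGraph} (f : PreMap G H) (α : G.V → ℕ) : H.V → ℕ :=
  fun w => b1 (fiber f w) + ∑ v : {v : G.V // f.fv (some v) = some w}, α v.1

end CGraph

/-!
STATEMENT 15: For composable combinatorial graph maps `f : Γ → Λ` and `g : Λ → Ξ`
between connected graphs and every vertex `u` of `Ξ`, one has
`b₁((g∘f)⁻¹(u)) = b₁(g⁻¹(u)) + Σ_{w ∈ V_Λ, g_v(w) = u} b₁(f⁻¹(w))`.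
Consequently the assignment `gr(Γ) = Map(V_Γ, ℕ)`, with
`gr(f)(α)(w) = b₁(f⁻¹(w)) + Σ_{v ∈ f_v⁻¹(w)} α(v)`, is a functor from the category of
connected graphs and combinatorial graph maps to `Set` (the grading modular operad):
it sends identities to identities and composites to composites.
-/

/-!
The first Betti number of a graph without ends at `∞` is the dimension of its space of rational
cycles: functions on arcs that are antisymmetric under `†` and have zero boundary. Pulling back
along `f_a` commutes with boundaries because the arcs over a given arc form a path, along which the
boundaries telescope. Writing `Z₁` for cycles, this gives an exact sequence
`0 → ⨁_w Z₁(f⁻¹(w)) → Z₁((g ∘ f)⁻¹(u)) → Z₁(g⁻¹(u)) → 0`, with `w` ranging over `g_v⁻¹(u)`, and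
the formula is its dimension count.

The last map is surjective because a cycle is constant along bivalent paths, hence descends to a
chain on the source of `f`. The boundary of this chain has total weight zero on each `f_v⁻¹(w)`, so
it can be cancelled by a chain in the fibers of `f`, which are connected.
-/

theorem finrank_map_add_finrank_inf_ker {k V W : Type*} [DivisionRing k] [AddCommGroup V]
    [Module k V] [FiniteDimensional k V] [AddCommGroup W] [Module k W] (L : V →ₗ[k] W)
    (p : Submodule k V) :
    Module.finrank k (p.map L) + Module.finrank k ↥(p ⊓ LinearMap.ker L) =
      Module.finrank k p := by
  have hker : (LinearMap.ker (L.domRestrict p)).map p.subtype = p ⊓ LinearMap.ker L := by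
    rw [LinearMap.ker_domRestrict, Submodule.map_comap_eq, Submodule.range_subtype]
  rw [← LinearMap.finrank_range_add_finrank_ker (L.domRestrict p), LinearMap.range_domRestrict,
    ← hker, Submodule.finrank_map_subtype_eq]

namespace CGraph

section Dirac

variable {V W X : Type*}

open Classical in
/-- The indicator function of a point of `V ⊔ {∞}`, as a `0`-chain on `V`: the basis vector of a
vertex, and `0` for the point at infinity. -/
noncomputable def dirac (x : Option V) : V → ℚ := fun v => if x = some v then 1 else 0

@[simp]
theorem dirac_none : dirac (none : Option V) = 0 := by
  funext v
  simp [dirac]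

open Classical in
@[simp]
theorem dirac_some (v : V) : dirac (some v) = Pi.single v 1 := by
  funext v'
  simp [dirac, Pi.single_apply, eq_comm]

variable [Fintype V]

theorem sum_smul_dirac_some (h : V → ℚ) : ∑ v, h v • dirac (some v) = h := by
  classical
  funext v
  simp [Pi.single_apply]

/-- The linear map induced on `0`-chains by a map `k : V ⊔ {∞} → W ⊔ {∞}`. -/
noncomputable def pushforward (k : Option V → Option W) : (V → ℚ) →ₗ[ℚ] (W → ℚ) :=
  Fintype.linearCombination ℚ fun v => dirac (k (some v))

theorem pushforward_apply (k : Option V → Option W) (h : V → ℚ) :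
    pushforward k h = ∑ v, h v • dirac (k (some v)) :=
  Fintype.linearCombination_apply ..

theorem pushforward_dirac {k : Option V → Option W} (hk : k none = none) (x : Option V) :
    pushforward k (dirac x) = dirac (k x) := by
  classical
  cases x <;> simp [hk, pushforward, Fintype.linearCombination_apply_single]

theorem pushforward_pushforward [Fintype W] {l : Option W → Option X} (hl : l none = none)
    (k : Option V → Option W) (h : V → ℚ) :
    pushforward l (pushforward k h) = pushforward (l ∘ k) h := by
  simp [pushforward_apply k, pushforward_apply (l ∘ k), pushforward_dirac hl]

theorem pushforward_id (h : V → ℚ) : pushforward id h = h := by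
  rw [pushforward_apply]
  exact sum_smul_dirac_some h

theorem pushforward_map_apply {k : V → W} (hk : Function.Injective k) (h : V → ℚ) (v : V) :
    pushforward (Option.map k) h (k v) = h v := by
  classical
  simp [pushforward_apply, Pi.single_apply, hk.eq_iff]

-- A chain in the kernel is a combination of differences of points with the same image: subtract
-- from each point in its support a chosen representative of its fiber.
theorem mem_of_pushforward_eq_zero [Finite W] {k : Option V → Option W} (hk : k none = none)
    {S : Submodule ℚ (V → ℚ)} {h : V → ℚ} (h_zero : pushforward k h = 0)
    (h_finite : ∀ v, h v ≠ 0 → k (some v) ≠ none)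
    (h_sub : ∀ v v', h v ≠ 0 → k (some v) = k (some v') →
      dirac (some v) - dirac (some v') ∈ S) : h ∈ S := by
  cases nonempty_fintype W
  let ρ (y : Option W) : Option V := y.bind fun w => Function.invFun k (some w)
  have hρ (x : Option V) : k (ρ (k x)) = k x := by
    cases hx : k x with
    | none => exact hk
    | some w => exact Function.invFun_eq ⟨x, hx⟩
  have h_repr : ∑ v, h v • dirac (ρ (k (some v))) = 0 := by
    have h_comp := pushforward_pushforward (l := ρ) rfl k h
    rw [h_zero, map_zero, pushforward_apply] at h_comp
    exact h_comp.symm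
  have h_eq : h = ∑ v, h v • (dirac (some v) - dirac (ρ (k (some v)))) := by
    simp_rw [smul_sub, Finset.sum_sub_distrib, h_repr, sub_zero, sum_smul_dirac_some]
  rw [h_eq]
  refine S.sum_mem fun v _ => ?_
  rcases eq_or_ne (h v) 0 with hv | hv
  · simp [hv]
  obtain ⟨v', hv'⟩ : ∃ v', ρ (k (some v)) = some v' := Option.ne_none_iff_exists'.1 fun h_none =>
    h_finite v hv (by rw [← hρ, h_none, hk])
  rw [hv']
  exact S.smul_mem _ (h_sub v v' hv (by rw [← hv', hρ]))

end Dirac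

section Chains

variable {G : CGraph}

/-- The boundary `t(a) - t(a†)` of a single arc. -/
noncomputable def arcBoundary (G : CGraph) (a : G.A) : G.V → ℚ :=
  dirac (G.t a) - dirac (G.t (G.dag a))

theorem arcBoundary_dag (a : G.A) : G.arcBoundary (G.dag a) = -G.arcBoundary a := by
  simp [arcBoundary, G.dag_dag]

/-- The boundary operator on functions on arcs, extending `arcBoundary` linearly. On antisymmetric
functions each edge is counted twice, so this is twice the usual boundary. -/
noncomputable def boundary (G : CGraph) : (G.A → ℚ) →ₗ[ℚ] (G.V → ℚ) :=
  Fintype.linearCombination ℚ G.arcBoundary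

theorem boundary_apply (φ : G.A → ℚ) : G.boundary φ = ∑ a, φ a • G.arcBoundary a :=
  Fintype.linearCombination_apply ..

open Classical in
theorem boundary_single (a : G.A) : G.boundary (Pi.single a 1) = G.arcBoundary a := by
  simp [boundary, Fintype.linearCombination_apply_single]

/-- The space of `1`-chains supported on a set `S` of arcs, encoded as the functions on arcs that
are antisymmetric under `†` and vanish outside `S`. -/
def chainsOn (G : CGraph) (S : Set G.A) : Submodule ℚ (G.A → ℚ) where
  carrier := {φ | (∀ a, φ (G.dag a) = -φ a) ∧ ∀ a, φ a ≠ 0 → a ∈ S}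
  zero_mem' := by simp
  add_mem' := by
    rintro φ ψ ⟨hφ, hφS⟩ ⟨hψ, hψS⟩
    refine ⟨fun a => by simp [hφ, hψ, add_comm], fun a ha => ?_⟩
    by_contra haS
    exact ha (by simp [not_imp_comm.1 (hφS a) haS, not_imp_comm.1 (hψS a) haS])
  smul_mem' := by
    rintro c φ ⟨hφ, hφS⟩
    exact ⟨fun a => by simp [hφ], fun a ha => hφS a (right_ne_zero_of_mul ha)⟩

/-- The space of `1`-cycles supported on a set `S` of arcs. -/
noncomputable def cyclesOn (G : CGraph) (S : Set G.A) : Submodule ℚ (G.A → ℚ) :=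
  G.chainsOn S ⊓ LinearMap.ker G.boundary

variable {S T : Set G.A} {φ : G.A → ℚ}

theorem eq_zero_of_mem_chainsOn (hφ : φ ∈ G.chainsOn S) {a : G.A} (ha : a ∉ S) : φ a = 0 :=
  not_imp_comm.1 (hφ.2 a) ha

theorem chainsOn_mono (h : S ⊆ T) : G.chainsOn S ≤ G.chainsOn T :=
  fun _ hφ => ⟨hφ.1, fun a ha => h (hφ.2 a ha)⟩

theorem cyclesOn_empty : G.cyclesOn ∅ = ⊥ :=
  eq_bot_iff.2 fun _ hφ => funext fun _ => eq_zero_of_mem_chainsOn hφ.1 (Set.notMem_empty _)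

theorem cyclesOn_inf_ker_funLeft {B : Type*} (i : B → G.A) :
    G.cyclesOn S ⊓ LinearMap.ker (LinearMap.funLeft ℚ ℚ i) = G.cyclesOn (S \ Set.range i) := by
  ext φ
  constructor
  · rintro ⟨⟨hφ, hφ_bd⟩, hφ_ker⟩
    refine ⟨⟨hφ.1, fun a ha => ⟨hφ.2 a ha, ?_⟩⟩, hφ_bd⟩
    rintro ⟨b, rfl⟩
    exact ha (congrFun hφ_ker b)
  · rintro ⟨hφ, hφ_bd⟩
    exact ⟨⟨chainsOn_mono Set.sdiff_subset hφ, hφ_bd⟩,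
      funext fun b => eq_zero_of_mem_chainsOn hφ fun hb => hb.2 ⟨b, rfl⟩⟩

open Classical in
theorem boundary_apply_of_mem_chainsOn (hφ : φ ∈ G.chainsOn S) (v : G.V) :
    G.boundary φ v = 2 * ∑ a with G.t a = some v, φ a := by
  have h_dag : ∑ a, φ a * dirac (G.t (G.dag a)) v = -∑ a, φ a * dirac (G.t a) v := by
    rw [← Finset.sum_neg_distrib, ← (Function.Involutive.bijective G.dag_dag).sum_comp]
    simp [G.dag_dag, hφ.1]
  simp only [boundary_apply, arcBoundary, Finset.sum_apply, Pi.smul_apply, Pi.sub_apply,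
    smul_eq_mul, mul_sub, Finset.sum_sub_distrib, h_dag, sub_neg_eq_add, ← two_mul]
  simp [dirac, Finset.sum_filter]

theorem exists_ne_zero_of_boundary_apply_ne_zero (hφ : φ ∈ G.chainsOn S) {v : G.V}
    (hv : G.boundary φ v ≠ 0) : ∃ a, φ a ≠ 0 ∧ G.t a = some v := by
  classical
  rw [boundary_apply_of_mem_chainsOn hφ] at hv
  obtain ⟨a, ha, ha_ne⟩ := Finset.exists_ne_zero_of_sum_ne_zero (right_ne_zero_of_mul hv)
  exact ⟨a, ha_ne, (Finset.mem_filter.1 ha).2⟩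

theorem arcBoundary_mem_map_chainsOn {a : G.A} (ha : a ∈ S) (ha' : G.dag a ∈ S) :
    G.arcBoundary a ∈ (G.chainsOn S).map G.boundary := by
  classical
  refine ⟨(2⁻¹ : ℚ) • (Pi.single a 1 - Pi.single (G.dag a) 1), ⟨fun b => ?_, fun b hb => ?_⟩, ?_⟩
  · have h_dag : G.dag b = a ↔ b = G.dag a := Function.Involutive.eq_iff G.dag_dag
    have h_dag' : G.dag b = G.dag a ↔ b = a := (Function.Involutive.injective G.dag_dag).eq_iff
    simp only [Pi.smul_apply, Pi.sub_apply, Pi.single_apply, h_dag, h_dag', smul_eq_mul]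
    ring
  · by_contra hbS
    exact hb (by simp [ne_of_mem_of_not_mem ha hbS |>.symm, ne_of_mem_of_not_mem ha' hbS |>.symm])
  · rw [map_smul, map_sub, boundary_single, boundary_single, arcBoundary_dag]
    module

theorem map_boundary_chainsOn_univ :
    (G.chainsOn Set.univ).map G.boundary = LinearMap.range G.boundary := by
  refine le_antisymm LinearMap.map_le_range ?_
  rw [boundary, Fintype.range_linearCombination, Submodule.span_le]
  rintro _ ⟨a, rfl⟩
  exact arcBoundary_mem_map_chainsOn (Set.mem_univ a) (Set.mem_univ _)

-- The trace of the projection `φ ↦ (φ - φ ∘ †) / 2`: composition with `†` has trace `0` because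
-- `†` has no fixed points.
theorem two_mul_finrank_chainsOn_univ (G : CGraph) :
    2 * Module.finrank ℚ (G.chainsOn Set.univ) = Fintype.card G.A := by
  classical
  have h_proj : LinearMap.IsProj (G.chainsOn Set.univ)
      ((2⁻¹ : ℚ) • (LinearMap.id - LinearMap.funLeft ℚ ℚ G.dag)) := by
    refine ⟨fun φ => ⟨fun a => ?_, fun a _ => Set.mem_univ a⟩, fun φ hφ => ?_⟩
    · simp only [LinearMap.smul_apply, LinearMap.sub_apply, LinearMap.id_apply, Pi.smul_apply,
        Pi.sub_apply, LinearMap.funLeft_apply, G.dag_dag, smul_eq_mul]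
      ring
    · ext a
      simp only [LinearMap.smul_apply, LinearMap.sub_apply, LinearMap.id_apply, Pi.smul_apply,
        Pi.sub_apply, LinearMap.funLeft_apply, hφ.1, smul_eq_mul]
      ring
  have h_trace : LinearMap.trace ℚ (G.A → ℚ) (LinearMap.funLeft ℚ ℚ G.dag) = 0 := by
    simp [LinearMap.trace_eq_matrix_trace ℚ (Pi.basisFun ℚ G.A), Matrix.trace,
      LinearMap.funLeft_apply, G.dag_ne]
  have := h_proj.trace
  rw [map_smul, map_sub, h_trace, LinearMap.trace_id, Module.finrank_fintype_fun_eq_card,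
    sub_zero, smul_eq_mul] at this
  have : (2 * Module.finrank ℚ (G.chainsOn Set.univ) : ℚ) = Fintype.card G.A := by
    rw [← this]
    ring
  exact_mod_cast this

end Chains

section Betti

variable {D : CGraph}

theorem mkQ_dirac_eq_of_touch_eq {v v' : D.V}
    (h : Quot.mk D.Touch (Sum.inl v) = Quot.mk D.Touch (Sum.inl v')) :
    (LinearMap.range D.boundary).mkQ (dirac (some v)) =
      (LinearMap.range D.boundary).mkQ (dirac (some v')) := by
  classical
  let q (x : D.V ⊕ D.A) :=
    (LinearMap.range D.boundary).mkQ (dirac (Sum.elim some D.t x))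
  have hq (x y) (hxy : D.Touch x y) : q x = q y := by
    cases hxy with
    | dag a =>
      refine (Submodule.Quotient.eq _).2 ?_
      exact ⟨Pi.single a 1, boundary_single a⟩
    | incid a v hv => exact congrArg (fun x => (LinearMap.range D.boundary).mkQ (dirac x)) hv
  exact congrArg (Quot.lift q hq) h

theorem ker_pushforward_mk_touch (hD : ∀ a, D.t a ≠ none) :
    LinearMap.ker (pushforward (Option.map fun v => Quot.mk D.Touch (Sum.inl v))) =
      LinearMap.range D.boundary := by
  refine le_antisymm (fun h hh => ?_) ?_
  · refine mem_of_pushforward_eq_zero rfl hh (by simp) fun v v' _ hvv' => ?_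
    exact (Submodule.Quotient.eq _).1 (mkQ_dirac_eq_of_touch_eq (Option.some.inj hvv'))
  · rw [boundary, Fintype.range_linearCombination, Submodule.span_le]
    rintro _ ⟨a, rfl⟩
    obtain ⟨v, hv⟩ := Option.ne_none_iff_exists'.1 (hD a)
    obtain ⟨v', hv'⟩ := Option.ne_none_iff_exists'.1 (hD (D.dag a))
    have h_mk : Quot.mk D.Touch (Sum.inl v) = Quot.mk D.Touch (Sum.inl v') :=
      calc Quot.mk D.Touch (Sum.inl v)
        _ = Quot.mk _ (Sum.inr a) := (Quot.sound (Touch.incid a v hv)).symm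
        _ = Quot.mk _ (Sum.inr (D.dag a)) := Quot.sound (Touch.dag a)
        _ = Quot.mk _ (Sum.inl v') := Quot.sound (Touch.incid _ v' hv')
    rw [SetLike.mem_coe, LinearMap.mem_ker, arcBoundary, map_sub, pushforward_dirac rfl,
      pushforward_dirac rfl, hv, hv', Option.map_some, Option.map_some, h_mk, sub_self]

theorem finrank_range_boundary_add_card_components (hD : ∀ a, D.t a ≠ none) :
    Module.finrank ℚ (LinearMap.range D.boundary) + Nat.card (Quot D.Touch) =
      Fintype.card D.V := by
  have : Fintype (Quot D.Touch) := Fintype.ofFinite _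
  let c (v : D.V) : Quot D.Touch := Quot.mk _ (Sum.inl v)
  have hc : Function.Surjective c := by
    rintro ⟨v | a⟩
    · exact ⟨v, rfl⟩
    · obtain ⟨v, hv⟩ := Option.ne_none_iff_exists'.1 (hD a)
      exact ⟨v, (Quot.sound (Touch.incid a v hv)).symm⟩
  have h_range : LinearMap.range (pushforward (Option.map c)) = ⊤ := by
    refine LinearMap.range_eq_top.2 fun h => ?_
    refine ⟨pushforward (Option.map (Function.surjInv hc)) h, ?_⟩
    rw [pushforward_pushforward rfl, Option.map_comp_map,
      (Function.rightInverse_surjInv hc).comp_eq_id, Option.map_id, pushforward_id]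
  have h_rank := LinearMap.finrank_range_add_finrank_ker (pushforward (Option.map c))
  rwa [ker_pushforward_mk_touch hD, h_range, finrank_top, Module.finrank_fintype_fun_eq_card,
    Module.finrank_fintype_fun_eq_card, add_comm, ← Nat.card_eq_fintype_card] at h_rank

theorem b1_eq_finrank_cyclesOn_univ (hD : ∀ a, D.t a ≠ none) :
    b1 D = Module.finrank ℚ (D.cyclesOn Set.univ) := by
  have h_chains := two_mul_finrank_chainsOn_univ D
  have h_components := finrank_range_boundary_add_card_components hD
  have h_rank := finrank_map_add_finrank_inf_ker D.boundary (D.chainsOn Set.univ)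
  rw [map_boundary_chainsOn_univ] at h_rank
  rw [b1, cyclesOn]
  omega

end Betti

section Extension

variable {D G : CGraph} {i : D.A → G.A} {S : Set D.A} {T : Set G.A} {x : D.A → ℚ}

theorem dag_mem_range_iff (hdag : ∀ d, i (D.dag d) = G.dag (i d)) {a : G.A} :
    G.dag a ∈ Set.range i ↔ a ∈ Set.range i := by
  constructor
  · rintro ⟨d, hd⟩
    exact ⟨D.dag d, by rw [hdag, hd, G.dag_dag]⟩
  · rintro ⟨d, rfl⟩
    exact ⟨D.dag d, hdag d⟩

theorem extend_mem_chainsOn (hdag : ∀ d, i (D.dag d) = G.dag (i d)) (hx : x ∈ D.chainsOn S)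
    (hxi : x.FactorsThrough i) (hST : ∀ d, x d ≠ 0 → i d ∈ T) :
    Function.extend i x 0 ∈ G.chainsOn T := by
  refine ⟨fun a => ?_, fun a ha => ?_⟩
  · by_cases ha : a ∈ Set.range i
    · obtain ⟨d, rfl⟩ := ha
      rw [← hdag, hxi.extend_apply, hxi.extend_apply, hx.1]
    · rw [Function.extend_apply' _ _ _ ha, Function.extend_apply' _ _ _ fun h =>
        ha ((dag_mem_range_iff hdag).1 h), Pi.zero_apply, Pi.zero_apply, neg_zero]
  · by_cases ha_range : a ∈ Set.range i
    · obtain ⟨d, rfl⟩ := ha_range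
      exact hST d (by rwa [hxi.extend_apply] at ha)
    · exact absurd (Function.extend_apply' _ _ _ ha_range) ha

variable {k : D.V → G.V}

theorem boundary_extend (hi : Function.Injective i) (hdag : ∀ d, i (D.dag d) = G.dag (i d))
    (ht : ∀ d, G.t (i d) = (D.t d).map k) (x : D.A → ℚ) :
    G.boundary (Function.extend i x 0) = pushforward (Option.map k) (D.boundary x) := by
  have h_arc (d : D.A) : pushforward (Option.map k) (D.arcBoundary d) = G.arcBoundary (i d) := by
    rw [arcBoundary, map_sub, pushforward_dirac rfl, pushforward_dirac rfl, ← ht, ← ht, hdag,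
      arcBoundary]
  simp_rw [boundary_apply, map_sum, map_smul, h_arc]
  refine (Fintype.sum_of_injective i hi _ _ (fun a ha => ?_) fun d => ?_).symm
  · rw [Function.extend_apply' _ _ _ ha, Pi.zero_apply, zero_smul]
  · rw [hi.extend_apply]

theorem map_extendByZero_cyclesOn_univ (hi : Function.Injective i) (hk : Function.Injective k)
    (hdag : ∀ d, i (D.dag d) = G.dag (i d)) (ht : ∀ d, G.t (i d) = (D.t d).map k) :
    (D.cyclesOn Set.univ).map (Function.ExtendByZero.linearMap ℚ i) =
      G.cyclesOn (Set.range i) := by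
  refine le_antisymm ?_ fun φ ⟨hφ, hφ_bd⟩ => ?_
  · rintro _ ⟨x, ⟨hx, hx_bd⟩, rfl⟩
    refine ⟨extend_mem_chainsOn hdag hx (hi.factorsThrough x) fun d _ => ⟨d, rfl⟩, ?_⟩
    exact (boundary_extend hi hdag ht x).trans (by rw [LinearMap.mem_ker.1 hx_bd, map_zero])
  · have h_extend : Function.extend i (φ ∘ i) 0 = φ := by
      funext a
      by_cases ha : a ∈ Set.range i
      · obtain ⟨d, rfl⟩ := ha
        exact hi.extend_apply ..
      · rw [Function.extend_apply' _ _ _ ha, eq_zero_of_mem_chainsOn hφ ha, Pi.zero_apply]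
    refine ⟨φ ∘ i, ⟨⟨fun d => ?_, fun d _ => Set.mem_univ d⟩, ?_⟩, h_extend⟩
    · rw [Function.comp_apply, hdag, hφ.1, Function.comp_apply]
    · funext v
      rw [← pushforward_map_apply hk (D.boundary _), ← boundary_extend hi hdag ht, h_extend,
        LinearMap.mem_ker.1 hφ_bd, Pi.zero_apply, Pi.zero_apply]

theorem finrank_cyclesOn_range (hi : Function.Injective i) (hk : Function.Injective k)
    (hdag : ∀ d, i (D.dag d) = G.dag (i d)) (ht : ∀ d, G.t (i d) = (D.t d).map k) :
    Module.finrank ℚ (G.cyclesOn (Set.range i)) = Module.finrank ℚ (D.cyclesOn Set.univ) := by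
  have h_inj : Function.Injective (Function.ExtendByZero.linearMap ℚ i) :=
    Function.extend_injective hi 0
  rw [← map_extendByZero_cyclesOn_univ hi hk hdag ht]
  exact (Submodule.equivMapOfInjective _ h_inj _).finrank_eq.symm

theorem b1_fiber {H : CGraph} (f : PreMap G H) (w : H.V) :
    b1 (fiber f w) = Module.finrank ℚ (G.cyclesOn {a | FiberArc f w a}) := by
  have h_range : Set.range (Subtype.val : (fiber f w).A → G.A) = {a | FiberArc f w a} :=
    Subtype.range_coe_subtype
  rw [b1_eq_finrank_cyclesOn_univ fun _ => Option.some_ne_none _, ← h_range]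
  exact (finrank_cyclesOn_range (D := fiber f w) (k := Subtype.val) Subtype.val_injective
    Subtype.val_injective (fun _ => rfl) fun a => a.2.2.2.1.choose_spec.1).symm

end Extension

section Decomposition

variable {G : CGraph} {S : Set G.A} {ι : Type*} {c : Option G.V → ι}

theorem indicator_mem_cyclesOn (hc : ∀ a ∈ S, c (G.t (G.dag a)) = c (G.t a)) {φ : G.A → ℚ}
    (hφ : φ ∈ G.cyclesOn S) (j : ι) :
    Set.indicator {a | c (G.t a) = j} φ ∈ G.cyclesOn {a ∈ S | c (G.t a) = j} := by
  classical
  have h_chain : Set.indicator {a | c (G.t a) = j} φ ∈ G.chainsOn {a ∈ S | c (G.t a) = j} := by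
    refine ⟨fun a => ?_, fun a ha => ?_⟩
    · by_cases haS : a ∈ S
      · simp [Set.indicator_apply, hc a haS, hφ.1.1, neg_ite]
      · have ha_zero : φ a = 0 := eq_zero_of_mem_chainsOn hφ.1 haS
        simp [Set.indicator_apply, hφ.1.1, ha_zero]
    · exact ⟨hφ.1.2 a (Set.indicator_apply_ne_zero.1 ha).2, (Set.indicator_apply_ne_zero.1 ha).1⟩
  refine ⟨h_chain, funext fun v => ?_⟩
  have h_sum : ∑ a with G.t a = some v, Set.indicator {a | c (G.t a) = j} φ a =
      ∑ a with G.t a = some v, if c (some v) = j then φ a else 0 := by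
    refine Finset.sum_congr rfl fun a ha => ?_
    simp [Set.indicator_apply, (Finset.mem_filter.1 ha).2]
  rw [boundary_apply_of_mem_chainsOn h_chain, h_sum]
  split_ifs
  · rw [← boundary_apply_of_mem_chainsOn hφ.1, LinearMap.mem_ker.1 hφ.2]
  · simp

theorem finrank_cyclesOn_eq_sum [Fintype ι] (hc : ∀ a ∈ S, c (G.t (G.dag a)) = c (G.t a)) :
    Module.finrank ℚ (G.cyclesOn S) =
      ∑ j, Module.finrank ℚ (G.cyclesOn {a ∈ S | c (G.t a) = j}) := by
  classical
  let Φ : (∀ j, G.cyclesOn {a ∈ S | c (G.t a) = j}) →ₗ[ℚ] (G.A → ℚ) :=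
    LinearMap.lsum ℚ _ ℚ fun j => (G.cyclesOn _).subtype
  have hΦ_sum (x) : Φ x = ∑ j, (x j : G.A → ℚ) := by simp [Φ, LinearMap.lsum_apply]
  have hΦ (x) (a : G.A) : Φ x a = (x (c (G.t a)) : G.A → ℚ) a := by
    rw [hΦ_sum, Finset.sum_apply]
    refine Finset.sum_eq_single _ (fun j _ hj => ?_) (by simp)
    exact eq_zero_of_mem_chainsOn (x j).2.1 fun h => hj h.2.symm
  have hΦ_inj : Function.Injective Φ := by
    intro x y hxy
    funext j
    ext a
    by_cases ha : c (G.t a) = j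
    · subst ha
      rw [← hΦ, hxy, hΦ]
    · rw [eq_zero_of_mem_chainsOn (x j).2.1 fun h => ha h.2,
        eq_zero_of_mem_chainsOn (y j).2.1 fun h => ha h.2]
  have hΦ_range : LinearMap.range Φ = G.cyclesOn S := by
    refine le_antisymm ?_ fun φ hφ => ?_
    · rintro _ ⟨x, rfl⟩
      rw [hΦ_sum]
      exact Submodule.sum_mem _ fun j _ =>
        ⟨chainsOn_mono (Set.sep_subset _ _) (x j).2.1, (x j).2.2⟩
    · refine ⟨fun j => ⟨_, indicator_mem_cyclesOn hc hφ j⟩, funext fun a => ?_⟩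
      rw [hΦ]
      exact Set.indicator_of_mem (s := {a' | c (G.t a') = c (G.t a)}) rfl φ
  rw [← hΦ_range, LinearMap.finrank_range_of_inj hΦ_inj, Module.finrank_pi_fintype]

end Decomposition

section Paths

variable {G H K : CGraph} {f : PreMap G H} {g : PreMap H K}

theorem IsPath.isChain {l : List G.A} {s e : Option G.V} (h : G.IsPath l s e) :
    l.IsChain fun a b => G.t a = G.t (G.dag b) := by
  induction l generalizing s with
  | nil => exact .nil
  | cons a l ih =>
    cases l with
    | nil => exact .singleton a
    | cons b l => exact .cons_cons h.2.1.symm (ih h.2)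

theorem IsPath.sum_arcBoundary {l : List G.A} {s e : Option G.V} (h : G.IsPath l s e) :
    (l.map G.arcBoundary).sum = dirac e - dirac s := by
  induction l generalizing s with
  | nil =>
    obtain rfl : s = e := h
    simp
  | cons a l ih =>
    rw [List.map_cons, List.sum_cons, ih h.2, arcBoundary, h.1]
    abel

/-- The part of the definition of a combinatorial graph map that only concerns endpoints: `f_v`
fixes `∞`, `f_a` commutes with `†`, and `f_v` identifies the endpoints of the arcs outside the image
of `f_a`. It is enough to describe the arcs of a fiber. -/
structure PreMap.CollapsesOffRange (f : PreMap G H) : Prop where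
  fv_none : f.fv none = none
  fa_dag : ∀ b, f.fa (H.dag b) = G.dag (f.fa b)
  fv_t_dag : ∀ a ∉ Set.range f.fa, f.fv (G.t (G.dag a)) = f.fv (G.t a)

theorem IsGraphMap.collapsesOffRange (hf : IsGraphMap f) : f.CollapsesOffRange where
  fv_none := hf.1
  fa_dag := hf.2.1
  fv_t_dag a ha := by
    obtain ⟨l, hl, -, h_path, -⟩ := hf.2.2.1 a
    obtain rfl : l = [] := List.eq_nil_iff_forall_not_mem.2 fun b hb => ha ⟨b, (hl b).1 hb⟩
    exact h_path

theorem IsPath.fv_eq (hg : g.CollapsesOffRange) {l : List H.A} {s e : Option H.V}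
    (h : H.IsPath l s e) (hl : ∀ b ∈ l, b ∉ Set.range g.fa) :
    g.fv s = g.fv e ∧ ∀ b ∈ l, g.fv (H.t b) = g.fv e := by
  induction l generalizing s with
  | nil => exact ⟨congrArg g.fv h, by simp⟩
  | cons b l ih =>
    obtain ⟨hb, hl⟩ := List.forall_mem_cons.1 hl
    obtain ⟨h_t, h_tail⟩ := ih h.2 hl
    exact ⟨by rw [← h.1, hg.fv_t_dag b hb, h_t], List.forall_mem_cons.2 ⟨h_t, h_tail⟩⟩

theorem IsGraphMap.fv_comp_fv_eq (hf : IsGraphMap f) (hg : g.CollapsesOffRange) {a : G.A}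
    (ha : a ∉ Set.range (f.comp g).fa) :
    g.fv (f.fv (G.t (G.dag a))) = g.fv (f.fv (G.t a)) ∧
      ∀ b, f.fa b = a → g.fv (H.t b) = g.fv (f.fv (G.t a)) := by
  obtain ⟨l, hl, -, h_path, -⟩ := hf.2.2.1 a
  have hl_range : ∀ b ∈ l, b ∉ Set.range g.fa := by
    rintro b hb ⟨c, rfl⟩
    exact ha ⟨c, (hl _).1 hb⟩
  obtain ⟨h_ends, h_mid⟩ := h_path.fv_eq hg hl_range
  exact ⟨h_ends, fun b hb => h_mid b ((hl b).2 hb)⟩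

theorem IsGraphMap.comp_collapsesOffRange (hf : IsGraphMap f) (hg : g.CollapsesOffRange) :
    (f.comp g).CollapsesOffRange where
  fv_none := (congrArg g.fv hf.1).trans hg.fv_none
  fa_dag c := (congrArg f.fa (hg.fa_dag c)).trans (hf.2.1 _)
  fv_t_dag _ ha := (hf.fv_comp_fv_eq hg ha).1

theorem fiberArc_iff (hf : f.CollapsesOffRange) {w : H.V} {a : G.A} :
    FiberArc f w a ↔ a ∉ Set.range f.fa ∧ f.fv (G.t a) = some w := by
  have h_vertex {x : Option G.V} (hx : f.fv x = some w) :
      ∃ v, x = some v ∧ f.fv (some v) = some w := by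
    cases x with
    | none => simp [hf.fv_none] at hx
    | some v => exact ⟨v, rfl, hx⟩
  constructor
  · rintro ⟨ha, -, ⟨v, hv, hw⟩, -⟩
    exact ⟨ha, hv ▸ hw⟩
  · rintro ⟨ha, hw⟩
    exact ⟨ha, fun h => ha ((dag_mem_range_iff hf.fa_dag).1 h), h_vertex hw,
      h_vertex ((hf.fv_t_dag a ha).trans hw)⟩

theorem fiberArc_comp_fa_iff (hf : IsGraphMap f) (hg : g.CollapsesOffRange) {u : K.V} {b : H.A} :
    FiberArc (f.comp g) u (f.fa b) ↔ ∀ b', f.fa b' = f.fa b → FiberArc g u b' := by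
  simp only [fiberArc_iff hg, fiberArc_iff (hf.comp_collapsesOffRange hg)]
  constructor
  · rintro ⟨hb_range, hb⟩ b' hb'
    refine ⟨?_, ((hf.fv_comp_fv_eq hg hb_range).2 b' hb').trans hb⟩
    rintro ⟨c, rfl⟩
    exact hb_range ⟨c, hb'⟩
  · intro h
    have hb_range : f.fa b ∉ Set.range (f.comp g).fa := fun ⟨c, hc⟩ => (h _ hc).1 ⟨c, rfl⟩
    exact ⟨hb_range, ((hf.fv_comp_fv_eq hg hb_range).2 b rfl).symm.trans (h b rfl).2⟩

theorem fiberArc_iff_of_comp (hf : f.CollapsesOffRange) (hfg : (f.comp g).CollapsesOffRange)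
    {u : K.V} {w : H.V} (hw : g.fv (some w) = some u) {a : G.A} :
    FiberArc f w a ↔
      (FiberArc (f.comp g) u a ∧ a ∉ Set.range f.fa) ∧ f.fv (G.t a) = some w := by
  rw [fiberArc_iff hf, fiberArc_iff hfg]
  constructor
  · rintro ⟨ha, haw⟩
    exact ⟨⟨⟨fun ⟨c, hc⟩ => ha ⟨_, hc⟩, (congrArg g.fv haw).trans hw⟩, ha⟩, haw⟩
  · rintro ⟨⟨-, ha⟩, haw⟩
    exact ⟨ha, haw⟩

theorem dirac_sub_dirac_mem_map_boundary (hf : IsGraphMap f) {w : H.V} {v v' : G.V}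
    (hv : f.fv (some v) = some w) (hv' : f.fv (some v') = some w) :
    dirac (some v) - dirac (some v') ∈ (G.chainsOn {a | FiberArc f w a}).map G.boundary := by
  obtain ⟨l, hl, h_path⟩ := hf.2.2.2.1 v' v (hv'.trans hv.symm) (by simp [hv'])
  have h_fiber : ∀ a ∈ l, FiberArc f w a := fun a ha =>
    (fiberArc_iff hf.collapsesOffRange).2
      ⟨hl a ha, ((h_path.fv_eq hf.collapsesOffRange hl).2 a ha).trans hv⟩
  rw [← h_path.sum_arcBoundary]
  refine list_sum_mem fun x hx => ?_
  obtain ⟨a, ha, rfl⟩ := List.mem_map.1 hx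
  refine arcBoundary_mem_map_chainsOn (h_fiber a ha) ?_
  exact ((fiber f w).dag ⟨a, h_fiber a ha⟩).2

end Paths

section Pullback

variable {G H K : CGraph} {f : PreMap G H} {g : PreMap H K}

open Classical in
theorem sum_arcBoundary_fa_fiber (hf : IsGraphMap f) (a : G.A) :
    ∑ b with f.fa b = a, H.arcBoundary b = pushforward f.fv (G.arcBoundary a) := by
  obtain ⟨l, hl, h_nodup, h_path, -⟩ := hf.2.2.1 a
  have h_filter : ({b | f.fa b = a} : Finset H.A) = l.toFinset := by
    ext b
    simp [hl]
  rw [h_filter, List.sum_toFinset _ h_nodup, h_path.sum_arcBoundary, arcBoundary, map_sub,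
    pushforward_dirac hf.1, pushforward_dirac hf.1]

theorem boundary_comp_fa (hf : IsGraphMap f) (φ : G.A → ℚ) :
    H.boundary (φ ∘ f.fa) = pushforward f.fv (G.boundary φ) := by
  classical
  calc H.boundary (φ ∘ f.fa)
    _ = ∑ a, ∑ b with f.fa b = a, φ (f.fa b) • H.arcBoundary b := by
      exact (boundary_apply _).trans (Finset.sum_fiberwise _ _ _).symm
    _ = ∑ a, φ a • ∑ b with f.fa b = a, H.arcBoundary b := by
      refine Finset.sum_congr rfl fun a _ => ?_
      rw [Finset.smul_sum]
      exact Finset.sum_congr rfl fun b hb => by rw [(Finset.mem_filter.1 hb).2]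
    _ = pushforward f.fv (G.boundary φ) := by
      simp_rw [sum_arcBoundary_fa_fiber hf, boundary_apply, map_sum, map_smul]

theorem eq_of_mem_cyclesOn_of_bivAt {S : Set H.A} (hS : ∀ b ∈ S, H.t b ≠ none) {ψ : H.A → ℚ}
    (hψ : ψ ∈ H.cyclesOn S) {b b' : H.A} (h_biv : H.BivAt (H.t b))
    (h_t : H.t b = H.t (H.dag b')) (h_ne : b ≠ H.dag b') : ψ b = ψ b' := by
  classical
  suffices ψ b + ψ (H.dag b') = 0 by
    rw [hψ.1.1] at this
    linarith
  obtain h_none | ⟨w, hw, h_two⟩ := h_biv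
  · rw [eq_zero_of_mem_chainsOn hψ.1 fun h => hS b h h_none,
      eq_zero_of_mem_chainsOn hψ.1 fun h => hS _ h (h_t ▸ h_none), add_zero]
  · have h_arcs : ({b, H.dag b'} : Finset H.A) = ({a | H.t a = some w} : Finset H.A) := by
      refine Finset.eq_of_subset_of_card_le (fun a ha => ?_) ?_
      · obtain rfl | rfl := by simpa using ha
        · simpa using hw
        · simpa [← h_t] using hw
      · rw [Finset.card_pair h_ne, ← Fintype.card_subtype, ← Nat.card_eq_fintype_card]
        exact h_two.le
    have h_bd := congrFun (LinearMap.mem_ker.1 hψ.2) w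
    rw [boundary_apply_of_mem_chainsOn hψ.1, ← h_arcs, Finset.sum_pair h_ne, Pi.zero_apply] at h_bd
    linarith

theorem factorsThrough_fa_of_mem_cyclesOn (hf : IsGraphMap f) {S : Set H.A}
    (hS : ∀ b ∈ S, H.t b ≠ none) {ψ : H.A → ℚ} (hψ : ψ ∈ H.cyclesOn S) :
    ψ.FactorsThrough f.fa := by
  intro b b' hbb'
  obtain ⟨l, hl, -, h_path, h_biv⟩ := hf.2.2.1 (f.fa b')
  have h_chain : l.IsChain fun c c' => ψ c = ψ c' := by
    refine List.isChain_iff_getElem.2 fun n hn => ?_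
    refine eq_of_mem_cyclesOn_of_bivAt hS hψ (h_biv n hn)
      (List.isChain_iff_getElem.1 h_path.isChain n hn) fun h_eq => G.dag_ne (f.fa b') ?_
    have h_fa := congrArg f.fa h_eq
    rwa [hf.2.1, (hl _).1 (List.getElem_mem _), (hl _).1 (List.getElem_mem _), eq_comm] at h_fa
  have : IsTrans H.A fun c c' => ψ c = ψ c' := ⟨fun _ _ _ => Eq.trans⟩
  have : Std.Symm fun c c' : H.A => ψ c = ψ c' := ⟨fun _ _ => Eq.symm⟩
  exact (List.isChain_iff_pairwise.1 h_chain).forall_of_forall (R := fun c c' => ψ c = ψ c')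
    (fun _ _ => rfl) ((hl b).2 hbb') ((hl b').2 rfl)

theorem map_funLeft_cyclesOn_le (hf : IsGraphMap f) (hg : g.CollapsesOffRange) (u : K.V) :
    (G.cyclesOn {a | FiberArc (f.comp g) u a}).map (LinearMap.funLeft ℚ ℚ f.fa) ≤
      H.cyclesOn {b | FiberArc g u b} := by
  rintro _ ⟨φ, ⟨hφ, hφ_bd⟩, rfl⟩
  refine ⟨⟨fun b => ?_, fun b hb => ?_⟩, ?_⟩
  · rw [LinearMap.funLeft_apply, hf.2.1, hφ.1, LinearMap.funLeft_apply]
  · exact (fiberArc_comp_fa_iff hf hg).1 (hφ.2 _ hb) b rfl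
  · exact (boundary_comp_fa hf φ).trans (by rw [LinearMap.mem_ker.1 hφ_bd, map_zero])

theorem boundary_mem_map_of_pushforward_eq_zero (hf : IsGraphMap f) (hg : g.CollapsesOffRange)
    {u : K.V} {φ : G.A → ℚ} (hφ : φ ∈ G.chainsOn {a | FiberArc (f.comp g) u a})
    (h_zero : pushforward f.fv (G.boundary φ) = 0) :
    G.boundary φ ∈
      (G.chainsOn ({a | FiberArc (f.comp g) u a} \ Set.range f.fa)).map G.boundary := by
  have hfg := hf.comp_collapsesOffRange hg
  have h_base (v) (hv : G.boundary φ v ≠ 0) : g.fv (f.fv (some v)) = some u := by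
    obtain ⟨a, ha, hav⟩ := exists_ne_zero_of_boundary_apply_ne_zero hφ hv
    exact hav ▸ ((fiberArc_iff hfg).1 (hφ.2 a ha)).2
  have h_finite (v) (hv : G.boundary φ v ≠ 0) : f.fv (some v) ≠ none := fun h_none => by
    simpa [h_none, hg.fv_none] using h_base v hv
  refine mem_of_pushforward_eq_zero hf.1 h_zero h_finite fun v v' hv hvv' => ?_
  obtain ⟨w, hw⟩ := Option.ne_none_iff_exists'.1 (h_finite v hv)
  refine Submodule.map_mono (chainsOn_mono fun a ha => ?_)
    (dirac_sub_dirac_mem_map_boundary hf hw (hvv' ▸ hw))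
  exact ((fiberArc_iff_of_comp hf.collapsesOffRange hfg (hw ▸ h_base v hv)).1 ha).1

theorem cyclesOn_le_map_funLeft (hf : IsGraphMap f) (hg : g.CollapsesOffRange) (u : K.V) :
    H.cyclesOn {b | FiberArc g u b} ≤
      (G.cyclesOn {a | FiberArc (f.comp g) u a}).map (LinearMap.funLeft ℚ ℚ f.fa) := by
  rintro ψ ⟨hψ, hψ_bd⟩
  have hψ_fa : ψ.FactorsThrough f.fa := by
    refine factorsThrough_fa_of_mem_cyclesOn hf (fun b hb => ?_) ⟨hψ, hψ_bd⟩
    obtain ⟨-, -, ⟨v, hv, -⟩, -⟩ := hb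
    simp [hv]
  set φ₀ := Function.extend f.fa ψ 0
  have hφ₀_fa : φ₀ ∘ f.fa = ψ := funext (hψ_fa.extend_apply 0)
  have hφ₀ : φ₀ ∈ G.chainsOn {a | FiberArc (f.comp g) u a} :=
    extend_mem_chainsOn hf.2.1 hψ hψ_fa fun b hb =>
      (fiberArc_comp_fa_iff hf hg).2 fun b' hb' => hψ.2 b' (by rwa [hψ_fa hb'])
  have h_zero : pushforward f.fv (G.boundary φ₀) = 0 := by
    rw [← boundary_comp_fa hf, hφ₀_fa, LinearMap.mem_ker.1 hψ_bd]
  obtain ⟨η, hη, hη_bd⟩ := boundary_mem_map_of_pushforward_eq_zero hf hg hφ₀ h_zero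
  refine ⟨φ₀ - η, ⟨Submodule.sub_mem _ hφ₀ (chainsOn_mono Set.sdiff_subset hη), ?_⟩, ?_⟩
  · exact (map_sub ..).trans (sub_eq_zero.2 hη_bd.symm)
  · funext b
    simp [LinearMap.funLeft_apply, ← hφ₀_fa,
      eq_zero_of_mem_chainsOn hη fun h => h.2 ⟨b, rfl⟩]

open Classical in
theorem finrank_cyclesOn_sdiff_range (hf : f.CollapsesOffRange)
    (hfg : (f.comp g).CollapsesOffRange) (hg : g.fv none = none) (u : K.V) :
    Module.finrank ℚ (G.cyclesOn ({a | FiberArc (f.comp g) u a} \ Set.range f.fa)) =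
      ∑ w : H.V, if g.fv (some w) = some u then b1 (fiber f w) else 0 := by
  have h_base {a} (ha : FiberArc (f.comp g) u a) : g.fv (f.fv (G.t a)) = some u :=
    ((fiberArc_iff hfg).1 ha).2
  rw [finrank_cyclesOn_eq_sum fun a ha => hf.fv_t_dag a ha.2, Fintype.sum_option]
  have h_none : {a ∈ {a | FiberArc (f.comp g) u a} \ Set.range f.fa | f.fv (G.t a) = none} = ∅ :=
    Set.eq_empty_of_forall_notMem fun a ⟨ha, ha_none⟩ => by
      simpa [ha_none, hg] using h_base ha.1
  rw [h_none, cyclesOn_empty, finrank_bot, zero_add]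
  refine Finset.sum_congr rfl fun w _ => ?_
  split_ifs with hw
  · rw [b1_fiber]
    exact congrArg (fun S => Module.finrank ℚ (G.cyclesOn S))
      (Set.ext fun a => (fiberArc_iff_of_comp hf hfg hw).symm)
  · have h_empty :
        {a ∈ {a | FiberArc (f.comp g) u a} \ Set.range f.fa | f.fv (G.t a) = some w} = ∅ :=
      Set.eq_empty_of_forall_notMem fun a ⟨ha, haw⟩ => hw (haw ▸ h_base ha.1)
    rw [h_empty, cyclesOn_empty, finrank_bot]

open Classical in
theorem b1_fiber_comp (hf : IsGraphMap f) (hg : g.CollapsesOffRange) (u : K.V) :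
    b1 (fiber (f.comp g) u) =
      b1 (fiber g u) + ∑ w : H.V, if g.fv (some w) = some u then b1 (fiber f w) else 0 := by
  have h_map : (G.cyclesOn {a | FiberArc (f.comp g) u a}).map (LinearMap.funLeft ℚ ℚ f.fa) =
      H.cyclesOn {b | FiberArc g u b} :=
    le_antisymm (map_funLeft_cyclesOn_le hf hg u) (cyclesOn_le_map_funLeft hf hg u)
  rw [b1_fiber, b1_fiber, ← finrank_map_add_finrank_inf_ker (LinearMap.funLeft ℚ ℚ f.fa), h_map,
    cyclesOn_inf_ker_funLeft, finrank_cyclesOn_sdiff_range hf.collapsesOffRange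
      (hf.comp_collapsesOffRange hg) hg.fv_none]

end Pullback

section Grading

variable {G H K : CGraph} {f : PreMap G H} {g : PreMap H K}

open Classical in
theorem grMap_apply (f : PreMap G H) (α : G.V → ℕ) (w : H.V) :
    grMap f α w = b1 (fiber f w) + ∑ v, if f.fv (some v) = some w then α v else 0 := by
  rw [grMap, ← Finset.sum_filter]
  exact congrArg _ (Finset.sum_subtype _ (by simp) α).symm

theorem b1_fiber_id (v : G.V) : b1 (fiber (PreMap.id G) v) = 0 := by
  have h_empty : {a | FiberArc (PreMap.id G) v a} = ∅ :=
    Set.eq_empty_of_forall_notMem fun a ha => ha.1 ⟨a, rfl⟩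
  rw [b1_fiber, h_empty, cyclesOn_empty, finrank_bot]

theorem grMap_id (G : CGraph) : grMap (PreMap.id G) = id := by
  classical
  funext α v
  rw [grMap_apply, b1_fiber_id]
  simp [PreMap.id]

open Classical in
theorem sum_fiber_comp (hg : g.fv none = none) (α : G.V → ℕ) (u : K.V) :
    (∑ v, if (f.comp g).fv (some v) = some u then α v else 0) =
      ∑ w, if g.fv (some w) = some u then ∑ v, if f.fv (some v) = some w then α v else 0
        else 0 := by
  calc ∑ v, (if (f.comp g).fv (some v) = some u then α v else 0)
    _ = ∑ v, ∑ w, if f.fv (some v) = some w then if g.fv (some w) = some u then α v else 0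
        else 0 := by
      refine Finset.sum_congr rfl fun v _ => ?_
      cases hv : f.fv (some v) <;> simp [PreMap.comp, hv, hg]
    _ = _ := by
      rw [Finset.sum_comm]
      exact Finset.sum_congr rfl fun w _ => by split_ifs <;> simp

theorem grMap_comp (hf : IsGraphMap f) (hg : g.CollapsesOffRange) :
    grMap (f.comp g) = grMap g ∘ grMap f := by
  classical
  funext α u
  calc grMap (f.comp g) α u
    _ = b1 (fiber g u) + ∑ w, (if g.fv (some w) = some u then b1 (fiber f w) else 0) +
        ∑ w, (if g.fv (some w) = some u then ∑ v, if f.fv (some v) = some w then α v else 0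
          else 0) := by
      rw [grMap_apply, b1_fiber_comp hf hg, sum_fiber_comp hg.fv_none]
    _ = b1 (fiber g u) + ∑ w, (if g.fv (some w) = some u then grMap f α w else 0) := by
      rw [add_assoc, ← Finset.sum_add_distrib]
      refine congrArg _ (Finset.sum_congr rfl fun w _ => ?_)
      split_ifs <;> simp [grMap_apply]
    _ = grMap g (grMap f α) u := (grMap_apply ..).symm

end Grading

end CGraph

open CGraph in
open Classical in
theorem b1_fiber_comp_and_gr_functor_general :
    (∀ (G H K : CGraph) (f : PreMap G H) (g : PreMap H K),
      IsGraphMap f → g.CollapsesOffRange →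
        ∀ u : K.V, b1 (fiber (f.comp g) u) =
          b1 (fiber g u) +
            ∑ w : H.V, (if g.fv (some w) = some u then b1 (fiber f w) else 0)) ∧
    (∀ G : CGraph, grMap (PreMap.id G) = id) ∧
    (∀ (G H K : CGraph) (f : PreMap G H) (g : PreMap H K),
      IsGraphMap f → g.CollapsesOffRange → grMap (f.comp g) = grMap g ∘ grMap f) :=
  ⟨fun _ _ _ _ _ => b1_fiber_comp, grMap_id, fun _ _ _ _ _ => grMap_comp⟩

open CGraph in
open Classical in
theorem b1_fiber_comp_and_gr_functor :
    (∀ (G H K : CGraph), G.Connected → H.Connected → K.Connected →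
      ∀ (f : PreMap G H) (g : PreMap H K), IsGraphMap f → IsGraphMap g →
        ∀ u : K.V, b1 (fiber (f.comp g) u) =
          b1 (fiber g u) +
            ∑ w : H.V, (if g.fv (some w) = some u then b1 (fiber f w) else 0)) ∧
    (∀ G : CGraph, G.Connected → grMap (PreMap.id G) = id) ∧
    (∀ (G H K : CGraph), G.Connected → H.Connected → K.Connected →
      ∀ (f : PreMap G H) (g : PreMap H K), IsGraphMap f → IsGraphMap g →
        grMap (f.comp g) = grMap g ∘ grMap f) :=
  ⟨fun G H K _ _ _ f g hf hg =>
      b1_fiber_comp_and_gr_functor_general.1 G H K f g hf hg.collapsesOffRange,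
    fun G _ => b1_fiber_comp_and_gr_functor_general.2.1 G,
    fun G H K _ _ _ f g hf hg =>
      b1_fiber_comp_and_gr_functor_general.2.2 G H K f g hf hg.collapsesOffRange⟩
end
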